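/- arXiv:1904.07007 — 2 statements merged into one kernel-verified Lean document; each statement's English description precedes it below -/
import Mathlib

section
/- Let β ∈ (1,2) be a multinacci number. Then E_β = [0, 1 − 1/β) \ ⋃ [t_L, t_R), where the union is taken over all β-Lyndon intervals [t_L, t_R). -/
open Set Filter MeasureTheory

/-- The β-transformation `x ↦ βx (mod 1)`. -/
noncomputable def Tbeta (β x : ℝ) : ℝ := Int.fract (β * x)

/-- The survivor set `K_β(t) = {x ∈ [0,1) : T_β^n x ≥ t for all n ≥ 0}`. -/
def Kset (β t : ℝ) : Set ℝ := {x | x ∈ Set.Ico (0 : ℝ) 1 ∧ ∀ n : ℕ, t ≤ (Tbeta β)^[n] x}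

/-- Strict lexicographic order on sequences of naturals. -/
def seqLt (x y : ℕ → ℕ) : Prop := ∃ n, (∀ i, i < n → x i = y i) ∧ x n < y n

/-- Lexicographic order on sequences of naturals. -/
def seqLe (x y : ℕ → ℕ) : Prop := x = y ∨ seqLt x y

/-- The `n`-th iterate of the left shift. -/
def shiftN (n : ℕ) (x : ℕ → ℕ) : ℕ → ℕ := fun i => x (i + n)

/-- The sequence `w 0^∞`. -/
def wordSeq (w : List ℕ) : ℕ → ℕ := fun i => w.getD i 0

/-- The periodic sequence `w^∞`. -/
def perSeq (w : List ℕ) : ℕ → ℕ := fun i => w.getD (i % w.length) 0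

/-- The sequence obtained by concatenating the word `w` with the sequence `x`. -/
def catSeq (w : List ℕ) (x : ℕ → ℕ) : ℕ → ℕ :=
  fun i => if i < w.length then w.getD i 0 else x (i - w.length)

/-- The greedy β-expansion of `t`: the digit `b_{i+1}` is `⌊β T_β^i t⌋`. -/
noncomputable def greedy (β t : ℝ) : ℕ → ℕ := fun i => (⌊β * (Tbeta β)^[i] t⌋).toNat

/-- `d` is the quasi-greedy β-expansion of `1`: the lexicographically largest
sequence in `{0,1}^ℕ` not ending in `0^∞` whose digits sum to `1` in base `β`. -/
def IsQuasiGreedy (β : ℝ) (d : ℕ → ℕ) : Prop :=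
  (∀ i, d i ≤ 1) ∧ (¬ ∃ N, ∀ n, N ≤ n → d n = 0) ∧
  (∑' i : ℕ, (d i : ℝ) / β ^ (i + 1) = 1) ∧
  ∀ e : ℕ → ℕ, (∀ i, e i ≤ 1) → (¬ ∃ N, ∀ n, N ≤ n → e n = 0) →
    (∑' i : ℕ, (e i : ℝ) / β ^ (i + 1) = 1) → seqLe e d

/-- `s = s_1…s_p` is a β-Lyndon word: `s_{i+1}…s_p ≻ s_1…s_{p-i}` for `1 ≤ i < p`
and `σ^n(s^∞) ≺ δ(β)` for all `n ≥ 0`. -/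
def IsBetaLyndon (β : ℝ) (s : List ℕ) : Prop :=
  s ≠ [] ∧ (∀ a ∈ s, a ≤ 1) ∧
  (∀ i, 1 ≤ i → i < s.length →
    seqLt (wordSeq (s.take (s.length - i))) (wordSeq (s.drop i))) ∧
  (∀ d : ℕ → ℕ, IsQuasiGreedy β d → ∀ n : ℕ, seqLt (shiftN n (perSeq s)) d)

/-- Left endpoint `t_L = Σ_{i=1}^p s_i β^{-i}` of the β-Lyndon interval generated by `s`. -/
noncomputable def lyndonLeft (β : ℝ) (s : List ℕ) : ℝ :=
  ∑ i ∈ Finset.range s.length, (s.getD i 0 : ℝ) / β ^ (i + 1)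

/-- Right endpoint `t_R = (β^p/(β^p - 1)) t_L` of the β-Lyndon interval generated by `s`. -/
noncomputable def lyndonRight (β : ℝ) (s : List ℕ) : ℝ :=
  β ^ s.length / (β ^ s.length - 1) * lyndonLeft β s

/-- The union of all β-Lyndon intervals `[t_L, t_R)`. -/
noncomputable def lyndonUnionIco (β : ℝ) : Set ℝ :=
  ⋃ s ∈ {s : List ℕ | IsBetaLyndon β s}, Set.Ico (lyndonLeft β s) (lyndonRight β s)

/-- The symbolic survivor set `K̃_β(t)` with upper bound sequence `d = δ(β)`. -/
def Ktilde (β t : ℝ) (d : ℕ → ℕ) : Set (ℕ → ℕ) :=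
  {x | (∀ i, x i ≤ 1) ∧ ∀ n : ℕ, seqLe (greedy β t) (shiftN n x) ∧ seqLe (shiftN n x) d}

/-- The set-valued bifurcation set `E_β`. -/
def Eset (β : ℝ) : Set ℝ :=
  {t | t ∈ Set.Ico (0 : ℝ) 1 ∧ ∀ t', t < t' → t' < 1 → Kset β t' ≠ Kset β t}

/-- The dimension bifurcation set `B_β`. -/
def Bset (β : ℝ) : Set ℝ :=
  {t | t ∈ Set.Ico (0 : ℝ) 1 ∧ ∀ t', t < t' → t' < 1 → dimH (Kset β t') ≠ dimH (Kset β t)}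

/-- `β` is a multinacci number: `β^{m+1} = β^m + ⋯ + β + 1` for some `m ≥ 1`. -/
def IsMultinacci (β : ℝ) : Prop :=
  ∃ m : ℕ, 1 ≤ m ∧ β ^ (m + 1) = ∑ i ∈ Finset.range (m + 1), β ^ i

/-! Since `T_β` is right-continuous, `t ∈ E_β` exactly when the orbit of `t` never drops below `t`.
If `T_β^n t < t` for the first time at `n`, then the first `n` greedy digits of `t` form a Lyndon
word `s` with `t_L ≤ t < t_R`; conversely, for `t` in such an interval the first `n` digits of `t`
are those of `s^∞`, and `T_β^n t < t` follows from `t < t_R`. For a multinacci `β` a binary sequence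
without the block `1^{m+1}` has all its shifts at most `δ(β) = (1^m 0)^∞`, and the shifts of `s^∞`
can reach `δ(β)` only if `s^∞ = (01^m)^∞`. The word `01^m` itself just fails to be β-Lyndon; its
interval is `[1 - 1/β, 1/β)`, and this is where the bound `1 - 1/β` comes from. -/

/-! ### Lexicographic order and shifts -/

lemma seqLe_iff_toLex_le {x y : ℕ → ℕ} : seqLe x y ↔ toLex x ≤ toLex y :=
  (le_iff_eq_or_lt (a := toLex x)).symm

lemma shiftN_shiftN (a b : ℕ) (x : ℕ → ℕ) : shiftN a (shiftN b x) = shiftN (a + b) x := by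
  funext i
  simp only [shiftN, add_assoc]

lemma shiftN_mul_of_shiftN_eq {x : ℕ → ℕ} {p : ℕ} (hper : shiftN p x = x) (c : ℕ) :
    shiftN (p * c) x = x := by
  induction c with
  | zero => rfl
  | succ c ih => rw [Nat.mul_succ, ← shiftN_shiftN, hper, ih]

/-! ### Values of digit sequences -/

section Value

/-- The value `∑_{i ≤ n} x_i β^{-i}` of the first `n` digits of `x`; the digit `x_i` is stored at
index `i - 1`. -/
noncomputable def seqPartialValue (β : ℝ) (x : ℕ → ℕ) (n : ℕ) : ℝ :=
  ∑ i ∈ Finset.range n, (x i : ℝ) / β ^ (i + 1)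

/-- The value `∑_{i ≥ 1} x_i β^{-i}` of the digit sequence `x` in base `β`; the digit `x_i` is
stored at index `i - 1`. -/
noncomputable def seqValue (β : ℝ) (x : ℕ → ℕ) : ℝ :=
  ∑' i : ℕ, (x i : ℝ) / β ^ (i + 1)

variable {β : ℝ} {x y : ℕ → ℕ} {b c n : ℕ}

lemma seqPartialValue_zero : seqPartialValue β x 0 = 0 := Finset.sum_range_zero _

lemma seqPartialValue_succ :
    seqPartialValue β x (n + 1) = seqPartialValue β x n + x n / β ^ (n + 1) :=
  Finset.sum_range_succ _ _

lemma pow_succ_mul_sub_seqPartialValue (hβ : 0 < β) (t : ℝ) :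
    β ^ (n + 1) * (t - seqPartialValue β x (n + 1)) =
      β * (β ^ n * (t - seqPartialValue β x n)) - x n := by
  rw [seqPartialValue_succ]
  field_simp
  ring

lemma seqPartialValue_congr (h : ∀ i < n, x i = y i) :
    seqPartialValue β x n = seqPartialValue β y n :=
  Finset.sum_congr rfl fun i hi => by rw [h i (Finset.mem_range.1 hi)]

lemma seqPartialValue_le_seqPartialValue (hβ : 0 < β) (h : ∀ i < n, x i ≤ y i) :
    seqPartialValue β x n ≤ seqPartialValue β y n :=
  Finset.sum_le_sum fun i hi => by
    have := h i (Finset.mem_range.1 hi)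
    gcongr

lemma seqPartialValue_mono (hβ : 0 < β) (x : ℕ → ℕ) : Monotone (seqPartialValue β x) :=
  monotone_nat_of_le_succ fun n => by
    rw [seqPartialValue_succ]
    exact le_add_of_nonneg_right (by positivity)

lemma summable_digits_div_pow (hβ : 1 < β) (hx : ∀ i, x i ≤ b) :
    Summable fun i : ℕ => (x i : ℝ) / β ^ (i + 1) := by
  have hβ0 : 0 < β := by linarith
  have hgeom : Summable fun i : ℕ => (b : ℝ) * (1 / β) ^ (i + 1) :=
    ((summable_nat_add_iff 1).2 (summable_geometric_of_lt_one (by positivity)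
      ((div_lt_one hβ0).2 hβ))).mul_left _
  refine hgeom.of_nonneg_of_le (fun i => by positivity) fun i => ?_
  rw [one_div_pow, mul_one_div]
  have := hx i
  gcongr

lemma seqValue_le_seqValue_const (hβ : 1 < β) (hx : ∀ i, x i ≤ b) :
    seqValue β x ≤ seqValue β fun _ => b := by
  refine (summable_digits_div_pow hβ hx).tsum_le_tsum (fun i => ?_)
    (summable_digits_div_pow hβ fun _ => le_rfl)
  have := hx i
  gcongr

lemma seqValue_eq_seqPartialValue_add (hβ : 1 < β) (hx : ∀ i, x i ≤ b) (n : ℕ) :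
    seqValue β x = seqPartialValue β x n + seqValue β (shiftN n x) / β ^ n := by
  rw [seqValue, seqValue, seqPartialValue, ← tsum_div_const,
    ← (summable_digits_div_pow hβ hx).sum_add_tsum_nat_add n]
  congr 2 with i
  rw [shiftN, div_div, ← pow_add, add_right_comm]

lemma seqPartialValue_le_seqValue (hβ : 1 < β) (hx : ∀ i, x i ≤ b) (n : ℕ) :
    seqPartialValue β x n ≤ seqValue β x :=
  (summable_digits_div_pow hβ hx).sum_le_tsum _ fun i _ => by positivity

lemma seqPartialValue_lt_seqValue (hβ : 1 < β) (hx : ∀ i, x i ≤ b) {i : ℕ} (hni : n ≤ i)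
    (hi : x i ≠ 0) : seqPartialValue β x n < seqValue β x := by
  have hβ0 : 0 < β := by linarith
  have hpos : 0 < (x i : ℝ) / β ^ (i + 1) := by positivity
  calc seqPartialValue β x n ≤ seqPartialValue β x i := seqPartialValue_mono hβ0 x hni
    _ < seqPartialValue β x (i + 1) := by
      rw [seqPartialValue_succ]
      exact lt_add_of_pos_right _ hpos
    _ ≤ seqValue β x := seqPartialValue_le_seqValue hβ hx _

lemma exists_seqPartialValue_add_le_of_seqLt (hβ : 0 < β) (h : seqLt x y) :
    ∃ n, seqPartialValue β x (n + 1) + 1 / β ^ (n + 1) ≤ seqPartialValue β y (n + 1) := by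
  obtain ⟨n, heq, hlt⟩ := h
  refine ⟨n, ?_⟩
  have hdigit : (x n : ℝ) + 1 ≤ y n := by exact_mod_cast hlt
  rw [seqPartialValue_succ, seqPartialValue_succ, seqPartialValue_congr heq, add_assoc, ← add_div]
  gcongr

lemma seqValue_lt_seqValue_of_seqLt (hβ : 1 < β) (hx : ∀ i, x i ≤ b) (hy : ∀ i, y i ≤ c)
    (hshift : ∀ n, seqValue β (shiftN n x) ≤ 1) (hy0 : ¬ ∃ N, ∀ n, N ≤ n → y n = 0)
    (hlt : seqLt x y) : seqValue β x < seqValue β y := by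
  have hβ0 : 0 < β := by linarith
  obtain ⟨n, hn⟩ := exists_seqPartialValue_add_le_of_seqLt hβ0 hlt
  push Not at hy0
  obtain ⟨i, hni, hi⟩ := hy0 (n + 1)
  calc seqValue β x
      = seqPartialValue β x (n + 1) + seqValue β (shiftN (n + 1) x) / β ^ (n + 1) :=
        seqValue_eq_seqPartialValue_add hβ hx _
    _ ≤ seqPartialValue β x (n + 1) + 1 / β ^ (n + 1) := by gcongr; exact hshift _
    _ ≤ seqPartialValue β y (n + 1) := hn
    _ < seqValue β y := seqPartialValue_lt_seqValue hβ hy hni hi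

/- If `M` is the supremum of the values of the shifts, comparing a shift with `d` at the first
differing digit bounds its value by `1 + max (M - 1) 0 / β`; hence `M ≤ 1`. -/
lemma seqValue_shiftN_le_one_of_seqLe {d : ℕ → ℕ} (hβ : 1 < β) (hx : ∀ i, x i ≤ b)
    (hd : ∀ i, d i ≤ c) (hd1 : seqValue β d ≤ 1) (h : ∀ n, seqLe (shiftN n x) d) (n : ℕ) :
    seqValue β (shiftN n x) ≤ 1 := by
  have hβ0 : 0 < β := by linarith
  set M := ⨆ n, seqValue β (shiftN n x)
  have hM : ∀ n, seqValue β (shiftN n x) ≤ M := le_ciSup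
    ⟨_, forall_mem_range.2 fun n => seqValue_le_seqValue_const hβ fun i => hx (i + n)⟩
  have contraction : ∀ n, seqValue β (shiftN n x) ≤ 1 + max (M - 1) 0 / β := by
    intro n
    rcases h n with heq | hlt
    · rw [heq]
      exact le_add_of_le_of_nonneg hd1 (by positivity)
    obtain ⟨q, hq⟩ := exists_seqPartialValue_add_le_of_seqLt hβ0 hlt
    have hprefix := hq.trans ((seqPartialValue_le_seqValue hβ hd _).trans hd1)
    have htail := hM (q + 1 + n)
    rw [← shiftN_shiftN] at htail
    calc seqValue β (shiftN n x)
        = seqPartialValue β (shiftN n x) (q + 1) +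
            seqValue β (shiftN (q + 1) (shiftN n x)) / β ^ (q + 1) :=
          seqValue_eq_seqPartialValue_add hβ (fun i => hx (i + n)) _
      _ ≤ (1 - 1 / β ^ (q + 1)) + M / β ^ (q + 1) := by
          gcongr
          linarith
      _ = 1 + (M - 1) / β ^ (q + 1) := by ring
      _ ≤ 1 + max (M - 1) 0 / β := by
          gcongr
          · exact le_max_left _ _
          · exact le_self_pow₀ hβ.le q.succ_ne_zero
  have hM1 : M ≤ 1 + max (M - 1) 0 / β := ciSup_le contraction
  refine (hM n).trans (not_lt.1 fun hlt => ?_)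
  rw [max_eq_left (by linarith)] at hM1
  linarith [div_lt_self (sub_pos.2 hlt) hβ]

lemma seqValue_eq_of_shiftN_eq (hβ : 1 < β) (hx : ∀ i, x i ≤ b) {p : ℕ} (hp : p ≠ 0)
    (hper : shiftN p x = x) :
    seqValue β x = β ^ p / (β ^ p - 1) * seqPartialValue β x p := by
  have hsplit := seqValue_eq_seqPartialValue_add hβ hx p
  have hpow : 1 < β ^ p := one_lt_pow₀ hβ hp
  have hne : β ^ p - 1 ≠ 0 := by linarith
  rw [hper] at hsplit
  field_simp at hsplit ⊢
  linarith

end Value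

/-! ### Quasi-greedy expansions -/

lemma isQuasiGreedy_of_shiftN_seqLe {β : ℝ} {d : ℕ → ℕ} (hβ : 1 < β) (hd : ∀ i, d i ≤ 1)
    (hd0 : ¬ ∃ N, ∀ n, N ≤ n → d n = 0) (hval : seqValue β d = 1)
    (hshift : ∀ n, seqLe (shiftN n d) d) : IsQuasiGreedy β d := by
  refine ⟨hd, hd0, hval, fun e he he0 hval_e => ?_⟩
  rw [seqLe_iff_toLex_le, ← not_lt]
  intro hlt
  have hshift_val := seqValue_shiftN_le_one_of_seqLe hβ hd hd hval.le hshift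
  exact (seqValue_lt_seqValue_of_seqLt hβ hd he hshift_val he0 hlt).ne (hval.trans hval_e.symm)

lemma IsQuasiGreedy.unique {β : ℝ} {d e : ℕ → ℕ} (hd : IsQuasiGreedy β d)
    (he : IsQuasiGreedy β e) : d = e := by
  obtain ⟨hd1, hd0, hdv, hdmax⟩ := hd
  obtain ⟨he1, he0, hev, hemax⟩ := he
  exact toLex.injective (le_antisymm (seqLe_iff_toLex_le.1 (hemax d hd1 hd0 hdv))
    (seqLe_iff_toLex_le.1 (hdmax e he1 he0 hev)))

/-! ### The expansions `(01^m)^∞` and `(1^m 0)^∞` -/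

section Multinacci

/-- The sequence `(01^m)^∞`, the immediate preimage of `δ(β)` under the shift that starts
with `0`. -/
def zeroOnes (m : ℕ) : ℕ → ℕ := fun i => if m + 1 ∣ i then 0 else 1

/-- The sequence `(1^m 0)^∞`, which is `δ(β)` for the multinacci number `β` of order `m`. -/
def onesZero (m : ℕ) : ℕ → ℕ := shiftN 1 (zeroOnes m)

/-- Every window of `m + 1` digits of `x` contains a `0`; for a binary sequence this says that the
block `1^{m+1}` does not occur in `x`. -/
def AvoidsOnes (m : ℕ) (x : ℕ → ℕ) : Prop := ∀ a, ∃ j ≤ m, x (a + j) = 0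

variable {m : ℕ} {x : ℕ → ℕ}

lemma zeroOnes_le_one (m i : ℕ) : zeroOnes m i ≤ 1 := by
  unfold zeroOnes
  split_ifs <;> simp

lemma onesZero_le_one (m i : ℕ) : onesZero m i ≤ 1 := zeroOnes_le_one m (i + 1)

lemma zeroOnes_eq_zero_iff {i : ℕ} : zeroOnes m i = 0 ↔ m + 1 ∣ i := by simp [zeroOnes]

lemma onesZero_eq_zero_iff {i : ℕ} : onesZero m i = 0 ↔ m + 1 ∣ i + 1 := zeroOnes_eq_zero_iff

lemma shiftN_zeroOnes_of_dvd {k : ℕ} (hk : m + 1 ∣ k) : shiftN k (zeroOnes m) = zeroOnes m := by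
  funext i
  simp only [shiftN, zeroOnes, Nat.dvd_add_left hk]

lemma avoidsOnes_zeroOnes (m : ℕ) : AvoidsOnes m (zeroOnes m) := by
  intro a
  have hr : (a + m) % (m + 1) ≤ m := Nat.lt_succ_iff.1 (Nat.mod_lt _ m.succ_pos)
  refine ⟨m - (a + m) % (m + 1), Nat.sub_le _ _, zeroOnes_eq_zero_iff.2 ?_⟩
  rw [← Nat.add_sub_assoc hr]
  exact Nat.dvd_sub_mod _

lemma AvoidsOnes.shiftN (hx : AvoidsOnes m x) (n : ℕ) : AvoidsOnes m (shiftN n x) := by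
  intro a
  obtain ⟨j, hj, hzero⟩ := hx (a + n)
  exact ⟨j, hj, by rwa [_root_.shiftN, add_right_comm]⟩

lemma AvoidsOnes.seqLe_onesZero (hx : AvoidsOnes m x) (hx1 : ∀ i, x i ≤ 1) :
    seqLe x (onesZero m) := by
  rw [seqLe_iff_toLex_le, ← not_lt]
  rintro ⟨q, heq, hlt⟩
  change ∀ i < q, onesZero m i = x i at heq
  change onesZero m q < x q at hlt
  have hxq := hx1 q
  have hdvd : m + 1 ∣ q + 1 := onesZero_eq_zero_iff.1 (by omega)
  have hmq : m + 1 ≤ q + 1 := Nat.le_of_dvd q.succ_pos hdvd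
  obtain ⟨j, hj, hzero⟩ := hx (q - m)
  rcases (show q - m + j ≤ q by omega).eq_or_lt with hlast | hbefore
  · rw [hlast] at hzero
    omega
  · rw [← heq _ hbefore, onesZero_eq_zero_iff] at hzero
    have hgap : m + 1 ∣ q + 1 - (q - m + j + 1) := Nat.dvd_sub hdvd hzero
    have := Nat.le_of_dvd (by omega) hgap
    omega

lemma eq_zeroOnes_of_shiftN_eq_onesZero {p k : ℕ} (hp : p ≠ 0) (hper : shiftN p x = x)
    (hx0 : x 0 = 0) (hk : shiftN k x = onesZero m) : x = zeroOnes m := by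
  obtain ⟨r, hr⟩ : ∃ r, p * k = r + k :=
    Nat.exists_eq_add_of_le' (Nat.le_mul_of_pos_left k (by omega))
  have hx : x = shiftN (r + 1) (zeroOnes m) := by
    rw [← shiftN_shiftN, ← onesZero, ← hk, shiftN_shiftN, ← hr, shiftN_mul_of_shiftN_eq hper]
  have hdvd : m + 1 ∣ r + 1 := by
    rw [← zeroOnes_eq_zero_iff, ← hx0, hx, shiftN, zero_add]
  rw [hx, shiftN_zeroOnes_of_dvd hdvd]

variable {β : ℝ}

lemma seqPartialValue_one (hβ : 0 < β) (hm : β ^ (m + 1) = ∑ i ∈ Finset.range (m + 1), β ^ i) :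
    seqPartialValue β 1 (m + 1) = 1 := by
  have hterm : ∀ i ∈ Finset.range (m + 1),
      ((1 : ℕ → ℕ) i : ℝ) / β ^ (i + 1) = β ^ (m + 1 - 1 - i) / β ^ (m + 1) := by
    intro i hi
    have hsplit : β ^ (m + 1) = β ^ (m + 1 - 1 - i) * β ^ (i + 1) := by
      rw [← pow_add]
      congr 1
      have := Finset.mem_range.1 hi
      omega
    rw [hsplit]
    simp only [Pi.one_apply, Nat.cast_one]
    field_simp
  rw [seqPartialValue, Finset.sum_congr rfl hterm, ← Finset.sum_div,
    Finset.sum_range_reflect fun i => β ^ i, ← hm, div_self (by positivity)]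

lemma seqPartialValue_onesZero (hβ : 0 < β)
    (hm : β ^ (m + 1) = ∑ i ∈ Finset.range (m + 1), β ^ i) :
    seqPartialValue β (onesZero m) (m + 1) = 1 - 1 / β ^ (m + 1) := by
  have hone := seqPartialValue_one hβ hm
  have hlast : onesZero m m = 0 := onesZero_eq_zero_iff.2 dvd_rfl
  have hinit : ∀ i < m, onesZero m i = (1 : ℕ → ℕ) i := fun i hi =>
    if_neg (Nat.not_dvd_of_pos_of_lt i.succ_pos (by omega))
  rw [seqPartialValue_succ] at hone ⊢
  rw [seqPartialValue_congr hinit, hlast]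
  simp only [Pi.one_apply, Nat.cast_one, Nat.cast_zero, zero_div] at hone ⊢
  linarith

lemma seqPartialValue_zeroOnes (hβ : 0 < β)
    (hm : β ^ (m + 1) = ∑ i ∈ Finset.range (m + 1), β ^ i) :
    seqPartialValue β (zeroOnes m) (m + 1) = 1 - 1 / β := by
  have hone := seqPartialValue_one hβ hm
  have hinit : ∀ i ∈ Finset.range m, (zeroOnes m (i + 1) : ℝ) / β ^ (i + 1 + 1) =
      ((1 : ℕ → ℕ) (i + 1) : ℝ) / β ^ (i + 1 + 1) := by
    intro i hi
    have := Finset.mem_range.1 hi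
    rw [zeroOnes, if_neg (Nat.not_dvd_of_pos_of_lt i.succ_pos (by omega)), Pi.one_apply]
  have hfirst : zeroOnes m 0 = 0 := zeroOnes_eq_zero_iff.2 (dvd_zero _)
  rw [seqPartialValue, Finset.sum_range_succ'] at hone ⊢
  rw [Finset.sum_congr rfl hinit, hfirst]
  simp only [Pi.one_apply, Nat.cast_one, Nat.cast_zero, zero_div, zero_add, pow_one] at hone ⊢
  linarith

lemma seqValue_onesZero (hβ : 1 < β) (hm : β ^ (m + 1) = ∑ i ∈ Finset.range (m + 1), β ^ i) :
    seqValue β (onesZero m) = 1 := by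
  have hper : shiftN (m + 1) (onesZero m) = onesZero m := by
    rw [onesZero, shiftN_shiftN, add_comm, ← shiftN_shiftN, shiftN_zeroOnes_of_dvd dvd_rfl]
  have hpow : 1 < β ^ (m + 1) := one_lt_pow₀ hβ m.succ_ne_zero
  rw [seqValue_eq_of_shiftN_eq hβ (onesZero_le_one m) m.succ_ne_zero hper,
    seqPartialValue_onesZero (by linarith) hm]
  have : β ^ (m + 1) - 1 ≠ 0 := by linarith
  field_simp

lemma seqValue_zeroOnes (hβ : 1 < β) (hm : β ^ (m + 1) = ∑ i ∈ Finset.range (m + 1), β ^ i) :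
    seqValue β (zeroOnes m) = 1 / β := by
  rw [seqValue_eq_seqPartialValue_add hβ (zeroOnes_le_one m) 1, ← onesZero,
    seqValue_onesZero hβ hm, seqPartialValue_succ, seqPartialValue_zero,
    zeroOnes_eq_zero_iff.2 (dvd_zero _)]
  simp

lemma isQuasiGreedy_onesZero (hβ : 1 < β) (hm1 : 1 ≤ m)
    (hm : β ^ (m + 1) = ∑ i ∈ Finset.range (m + 1), β ^ i) : IsQuasiGreedy β (onesZero m) := by
  refine isQuasiGreedy_of_shiftN_seqLe hβ (onesZero_le_one m) ?_ (seqValue_onesZero hβ hm)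
    fun n => (((avoidsOnes_zeroOnes m).shiftN 1).shiftN n).seqLe_onesZero
      fun i => onesZero_le_one m (i + n)
  rintro ⟨N, hN⟩
  have hdvd := onesZero_eq_zero_iff.1 (hN ((m + 1) * N) (Nat.le_mul_of_pos_left N m.succ_pos))
  rw [Nat.dvd_add_right (dvd_mul_right _ _), Nat.dvd_one] at hdvd
  omega

lemma AvoidsOnes.seqValue_shiftN_le_one (hx : AvoidsOnes m x) (hx1 : ∀ i, x i ≤ 1) (hβ : 1 < β)
    (hm : β ^ (m + 1) = ∑ i ∈ Finset.range (m + 1), β ^ i) (n : ℕ) :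
    seqValue β (_root_.shiftN n x) ≤ 1 :=
  seqValue_shiftN_le_one_of_seqLe hβ hx1 (onesZero_le_one m) (seqValue_onesZero hβ hm).le
    (fun k => (hx.shiftN k).seqLe_onesZero fun i => hx1 (i + k)) n

end Multinacci

/-! ### Orbits and greedy digits -/

section Dynamics

variable {β t u : ℝ} {x : ℕ → ℕ} {n : ℕ}

lemma iterate_Tbeta_nonneg (ht : 0 ≤ t) (n : ℕ) : 0 ≤ (Tbeta β)^[n] t := by
  cases n with
  | zero => exact ht
  | succ n =>
    rw [Function.iterate_succ_apply']
    exact Int.fract_nonneg _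

lemma iterate_Tbeta_lt_one (ht : t < 1) (n : ℕ) : (Tbeta β)^[n] t < 1 := by
  cases n with
  | zero => exact ht
  | succ n =>
    rw [Function.iterate_succ_apply']
    exact Int.fract_lt_one _

lemma iterate_Tbeta_eq_of_mem_Ico (hβ : 0 < β)
    (h : ∀ i ≤ n, β ^ i * (t - seqPartialValue β x i) ∈ Ico (0 : ℝ) 1) :
    (Tbeta β)^[n] t = β ^ n * (t - seqPartialValue β x n) := by
  induction n with
  | zero => simp [seqPartialValue_zero]
  | succ n ih =>
    have hfract := Int.fract_eq_self.2 (h (n + 1) le_rfl)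
    rw [Function.iterate_succ_apply', ih fun i hi => h i (by omega), Tbeta, ← hfract,
      pow_succ_mul_sub_seqPartialValue hβ, Int.fract_sub_natCast]

lemma natCast_greedy (hβ : 0 ≤ β) (ht : 0 ≤ t) (n : ℕ) :
    (greedy β t n : ℤ) = ⌊β * (Tbeta β)^[n] t⌋ :=
  Int.toNat_of_nonneg (Int.floor_nonneg.2 (mul_nonneg hβ (iterate_Tbeta_nonneg ht n)))

lemma greedy_le_one (hβ : 0 ≤ β) (hβ2 : β ≤ 2) (ht : t ∈ Ico (0 : ℝ) 1) (n : ℕ) :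
    greedy β t n ≤ 1 := by
  have hdigit := natCast_greedy hβ ht.1 n
  have hfloor : ⌊β * (Tbeta β)^[n] t⌋ < 2 := by
    rw [Int.floor_lt, Int.cast_ofNat]
    nlinarith [iterate_Tbeta_nonneg (β := β) ht.1 n, iterate_Tbeta_lt_one (β := β) ht.2 n]
  omega

lemma greedy_zero_eq_zero (h : β * t < 1) : greedy β t 0 = 0 :=
  Int.toNat_of_nonpos (Int.floor_le_iff.2 (by simpa using h))

lemma greedy_iterate_Tbeta (β t : ℝ) (i : ℕ) :
    greedy β ((Tbeta β)^[i] t) = shiftN i (greedy β t) := by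
  funext j
  rw [shiftN, greedy, greedy, Function.iterate_add_apply]

lemma iterate_Tbeta_eq_greedy (hβ : 0 < β) (ht : 0 ≤ t) (n : ℕ) :
    (Tbeta β)^[n] t = β ^ n * (t - seqPartialValue β (greedy β t) n) := by
  induction n with
  | zero => simp [seqPartialValue_zero]
  | succ n ih =>
    have hdigit : (greedy β t n : ℝ) = ⌊β * (Tbeta β)^[n] t⌋ := by
      exact_mod_cast natCast_greedy hβ.le ht n
    rw [Function.iterate_succ_apply', pow_succ_mul_sub_seqPartialValue hβ, ← ih, hdigit]
    rfl

lemma seqPartialValue_greedy_le (hβ : 0 < β) (ht : 0 ≤ t) (n : ℕ) :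
    seqPartialValue β (greedy β t) n ≤ t := by
  have hnonneg := iterate_Tbeta_nonneg (β := β) ht n
  rw [iterate_Tbeta_eq_greedy hβ ht] at hnonneg
  exact sub_nonneg.1 (nonneg_of_mul_nonneg_right hnonneg (by positivity))

lemma iterate_Tbeta_le_of_greedy_eq (hβ : 0 < β) (ht : 0 ≤ t) (htu : t ≤ u)
    (h : ∀ i < n, greedy β t i = greedy β u i) : (Tbeta β)^[n] t ≤ (Tbeta β)^[n] u := by
  rw [iterate_Tbeta_eq_greedy hβ ht, iterate_Tbeta_eq_greedy hβ (ht.trans htu),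
    seqPartialValue_congr h]
  gcongr

lemma exists_greedy_lt_of_iterate_Tbeta_lt (hβ : 0 < β) (ht : 0 ≤ t) (htu : t ≤ u)
    (h : (Tbeta β)^[n] u < (Tbeta β)^[n] t) :
    ∃ k < n, (∀ i < k, greedy β t i = greedy β u i) ∧ greedy β t k < greedy β u k := by
  classical
  have hdiff : ∃ k, k < n ∧ greedy β t k ≠ greedy β u k := by
    by_contra! hall
    exact h.not_ge (iterate_Tbeta_le_of_greedy_eq hβ ht htu hall)
  obtain ⟨hk, hne⟩ := Nat.find_spec hdiff
  have heq : ∀ i < Nat.find hdiff, greedy β t i = greedy β u i := fun i hi =>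
    not_not.1 fun hi' => Nat.find_min hdiff hi ⟨hi.trans hk, hi'⟩
  refine ⟨Nat.find hdiff, hk, heq, lt_of_le_of_ne (Int.toNat_le_toNat (Int.floor_le_floor ?_)) hne⟩
  have := iterate_Tbeta_le_of_greedy_eq hβ ht htu heq
  gcongr

lemma avoidsOnes_greedy {m : ℕ} (hβ : 0 < β)
    (hm : β ^ (m + 1) = ∑ i ∈ Finset.range (m + 1), β ^ i) (ht : t ∈ Ico (0 : ℝ) 1) :
    AvoidsOnes m (greedy β t) := by
  intro a
  by_contra! hones
  have hdigits : ∀ j < m + 1, (1 : ℕ → ℕ) j ≤ greedy β ((Tbeta β)^[a] t) j := by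
    intro j hj
    rw [greedy_iterate_Tbeta, shiftN, add_comm j a]
    exact Nat.one_le_iff_ne_zero.2 (hones j (by omega))
  have hle : (1 : ℝ) ≤ (Tbeta β)^[a] t :=
    calc 1 = seqPartialValue β 1 (m + 1) := (seqPartialValue_one hβ hm).symm
      _ ≤ seqPartialValue β (greedy β ((Tbeta β)^[a] t)) (m + 1) :=
        seqPartialValue_le_seqPartialValue hβ hdigits
      _ ≤ (Tbeta β)^[a] t := seqPartialValue_greedy_le hβ (iterate_Tbeta_nonneg ht.1 a) _
  exact hle.not_gt (iterate_Tbeta_lt_one ht.2 a)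

/- Below the value of `x`, and above the value of its first period, the first `p` greedy digits of
`t` are those of `x`. -/
lemma iterate_Tbeta_lt_self_of_shiftN_eq {b p : ℕ} (hβ : 1 < β) (hx : ∀ i, x i ≤ b) (hp : p ≠ 0)
    (hper : shiftN p x = x) (hshift : ∀ n, seqValue β (shiftN n x) ≤ 1)
    (hleft : seqPartialValue β x p ≤ t) (hright : t < seqValue β x) : (Tbeta β)^[p] t < t := by
  have hβ0 : 0 < β := by linarith
  have hpow : 1 < β ^ p := one_lt_pow₀ hβ hp
  have hdigits : ∀ i ≤ p, β ^ i * (t - seqPartialValue β x i) ∈ Ico (0 : ℝ) 1 := by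
    intro i hi
    have hmono := seqPartialValue_mono hβ0 x hi
    have htail : t - seqPartialValue β x i < 1 / β ^ i :=
      calc t - seqPartialValue β x i < seqValue β (shiftN i x) / β ^ i := by
            linarith [seqValue_eq_seqPartialValue_add hβ hx i]
        _ ≤ 1 / β ^ i := by gcongr; exact hshift i
    rw [lt_div_iff₀' (by positivity)] at htail
    exact ⟨mul_nonneg (by positivity) (by linarith), htail⟩
  rw [iterate_Tbeta_eq_of_mem_Ico hβ0 hdigits]
  rw [seqValue_eq_of_shiftN_eq hβ hx hp hper, div_mul_eq_mul_div, lt_div_iff₀ (by linarith)]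
    at hright
  linarith

lemma Tbeta_lt_self_of_inv_le (hβ : 0 < β) (hβ2 : β ≤ 2) (ht : 1 / β ≤ t) (ht1 : t < 1) :
    Tbeta β t < t := by
  rw [div_le_iff₀ hβ] at ht
  have hT : Tbeta β t = β * t - 1 :=
    Int.fract_eq_iff.2 ⟨by linarith, by nlinarith, 1, by simp⟩
  rw [hT]
  nlinarith

lemma exists_iterate_Tbeta_lt_self_of_one_sub_inv_le {m : ℕ} (hβ : 1 < β) (hβ2 : β ≤ 2)
    (hm : β ^ (m + 1) = ∑ i ∈ Finset.range (m + 1), β ^ i) (ht : 1 - 1 / β ≤ t) (ht1 : t < 1) :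
    ∃ n, (Tbeta β)^[n] t < t := by
  have hβ0 : 0 < β := by linarith
  rcases lt_or_ge t (1 / β) with hlt | hge
  · refine ⟨m + 1, iterate_Tbeta_lt_self_of_shiftN_eq hβ (zeroOnes_le_one m) m.succ_ne_zero
      (shiftN_zeroOnes_of_dvd dvd_rfl)
      ((avoidsOnes_zeroOnes m).seqValue_shiftN_le_one (zeroOnes_le_one m) hβ hm) ?_ ?_⟩
    · rwa [seqPartialValue_zeroOnes hβ0 hm]
    · rwa [seqValue_zeroOnes hβ hm]
  · exact ⟨1, Tbeta_lt_self_of_inv_le hβ0 hβ2 hge ht1⟩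

end Dynamics

/-! ### The bifurcation set -/

section Bifurcation

open scoped Topology

variable {β t : ℝ}

lemma tendsto_Tbeta_nhdsGE (hβ : 0 ≤ β) (t : ℝ) :
    Tendsto (Tbeta β) (𝓝[≥] t) (𝓝[≥] (Tbeta β t)) := by
  have hmul : Tendsto (β * ·) (𝓝[≥] t) (𝓝[≥] (β * t)) :=
    tendsto_nhdsWithin_iff.2 ⟨((continuous_const_mul β).tendsto t).mono_left nhdsWithin_le_nhds,
      eventually_nhdsWithin_of_forall fun y hy => mul_le_mul_of_nonneg_left hy hβ⟩
  have hfloor : ∀ᶠ y in 𝓝[≥] t, ⌊β * y⌋ = ⌊β * t⌋ :=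
    tendsto_pure.1 ((tendsto_floor_right_pure_floor (β * t)).comp hmul)
  have hsub : Tendsto (fun y => β * y - ⌊β * t⌋) (𝓝[≥] t) (𝓝[≥] (Tbeta β t)) := by
    refine tendsto_nhdsWithin_iff.2 ⟨(hmul.mono_right nhdsWithin_le_nhds).sub_const _, ?_⟩
    filter_upwards [self_mem_nhdsWithin] with y hy
    exact sub_le_sub_right (mul_le_mul_of_nonneg_left hy hβ) _
  refine hsub.congr' ?_
  filter_upwards [hfloor] with y hy
  rw [Tbeta, Int.fract, hy]

lemma tendsto_iterate_Tbeta_nhdsGE (hβ : 0 ≤ β) (t : ℝ) (n : ℕ) :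
    Tendsto (Tbeta β)^[n] (𝓝[≥] t) (𝓝[≥] ((Tbeta β)^[n] t)) := by
  induction n with
  | zero => exact tendsto_id
  | succ n ih =>
    rw [Function.iterate_succ', Function.comp_apply]
    exact (tendsto_Tbeta_nhdsGE hβ _).comp ih

lemma Kset_antitone (β : ℝ) : Antitone (Kset β) :=
  fun _ _ htu _ hx => ⟨hx.1, fun n => htu.trans (hx.2 n)⟩

lemma Kset_subset_of_iterate_Tbeta_lt {t' : ℝ} {n : ℕ}
    (h : ∀ y ∈ Ico t t', (Tbeta β)^[n] y < t) : Kset β t ⊆ Kset β t' := by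
  refine fun x hx => ⟨hx.1, fun k => not_lt.1 fun hk => ?_⟩
  have hlt := h _ ⟨hx.2 k, hk⟩
  rw [← Function.iterate_add_apply] at hlt
  exact hlt.not_ge (hx.2 (n + k))

lemma exists_Kset_eq_of_iterate_Tbeta_lt {n : ℕ} (hβ : 0 ≤ β) (ht : t < 1)
    (h : (Tbeta β)^[n] t < t) : ∃ t', t < t' ∧ t' < 1 ∧ Kset β t' = Kset β t := by
  have hnear : ∀ᶠ y in 𝓝[≥] t, (Tbeta β)^[n] y < t :=
    ((tendsto_iterate_Tbeta_nhdsGE hβ t n).mono_right nhdsWithin_le_nhds).eventually_lt_const h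
  obtain ⟨s, hts, hs⟩ :=
    (mem_nhdsGE_iff_exists_mem_Ioc_Ico_subset (show t < (1 + t) / 2 by linarith)).1 hnear
  exact ⟨s, hts.1, by linarith [hts.2], (Kset_antitone β hts.1.le).antisymm
    (Kset_subset_of_iterate_Tbeta_lt hs)⟩

lemma mem_Eset_iff (hβ : 0 ≤ β) :
    t ∈ Eset β ↔ t ∈ Ico (0 : ℝ) 1 ∧ ∀ n, t ≤ (Tbeta β)^[n] t := by
  refine and_congr_right fun ht => ⟨fun h n => not_lt.1 fun hn => ?_, fun h t' htt' _ heq => ?_⟩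
  · obtain ⟨t', htt', ht'1, heq⟩ := exists_Kset_eq_of_iterate_Tbeta_lt hβ ht.2 hn
    exact h t' htt' ht'1 heq
  · have htK : t ∈ Kset β t' := heq ▸ ⟨ht, h⟩
    exact htt'.not_ge (htK.2 0)

end Bifurcation

/-! ### Lyndon words -/

section Words

variable {β t : ℝ} {s : List ℕ} {b m n : ℕ}

/-- The word formed by the first `n` digits of `x`. -/
def prefixWord (x : ℕ → ℕ) (n : ℕ) : List ℕ := (List.range n).map x

lemma length_prefixWord (x : ℕ → ℕ) (n : ℕ) : (prefixWord x n).length = n := by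
  simp [prefixWord]

lemma wordSeq_prefixWord (x : ℕ → ℕ) {i : ℕ} (hi : i < n) : wordSeq (prefixWord x n) i = x i := by
  simp [wordSeq, prefixWord, hi]

lemma wordSeq_drop (s : List ℕ) (i : ℕ) : wordSeq (s.drop i) = shiftN i (wordSeq s) := by
  funext j
  simp [wordSeq, shiftN, add_comm]

lemma wordSeq_take (s : List ℕ) {i : ℕ} (hi : i < n) : wordSeq (s.take n) i = wordSeq s i := by
  simp [wordSeq, hi]

lemma perSeq_eq_wordSeq {i : ℕ} (hi : i < s.length) : perSeq s i = wordSeq s i := by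
  rw [perSeq, Nat.mod_eq_of_lt hi, wordSeq]

lemma perSeq_prefixWord (x : ℕ → ℕ) (hn : n ≠ 0) (i : ℕ) :
    perSeq (prefixWord x n) i = x (i % n) := by
  rw [perSeq, length_prefixWord]
  exact wordSeq_prefixWord x (Nat.mod_lt _ (by omega))

lemma shiftN_length_perSeq (s : List ℕ) : shiftN s.length (perSeq s) = perSeq s := by
  funext i
  simp only [shiftN, perSeq, Nat.add_mod_right]

lemma perSeq_le (hs : ∀ a ∈ s, a ≤ b) (i : ℕ) : perSeq s i ≤ b := by
  rw [perSeq, List.getD_eq_getElem?_getD]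
  rcases h : s[i % s.length]? with _ | a
  · exact Nat.zero_le b
  · exact hs a (List.mem_of_getElem? h)

lemma lyndonLeft_eq_seqPartialValue (β : ℝ) (s : List ℕ) :
    lyndonLeft β s = seqPartialValue β (perSeq s) s.length :=
  seqPartialValue_congr (x := wordSeq s) fun _ hi => (perSeq_eq_wordSeq hi).symm

lemma lyndonRight_eq_seqValue (hβ : 1 < β) (hs : ∀ a ∈ s, a ≤ b) (hne : s ≠ []) :
    lyndonRight β s = seqValue β (perSeq s) := by
  rw [lyndonRight, lyndonLeft_eq_seqPartialValue, seqValue_eq_of_shiftN_eq hβ (perSeq_le hs)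
    (mt List.length_eq_zero_iff.1 hne) (shiftN_length_perSeq s)]

lemma lyndonLeft_prefixWord (β : ℝ) (x : ℕ → ℕ) (n : ℕ) :
    lyndonLeft β (prefixWord x n) = seqPartialValue β x n := by
  rw [lyndonLeft, length_prefixWord]
  exact seqPartialValue_congr fun i hi => wordSeq_prefixWord x hi

lemma mem_Ico_lyndon_prefixWord_greedy (hβ : 1 < β) (ht : 0 ≤ t) (hn : n ≠ 0)
    (h : (Tbeta β)^[n] t < t) :
    t ∈ Ico (lyndonLeft β (prefixWord (greedy β t) n))
      (lyndonRight β (prefixWord (greedy β t) n)) := by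
  have hβ0 : 0 < β := by linarith
  have hpow : 1 < β ^ n := one_lt_pow₀ hβ hn
  rw [iterate_Tbeta_eq_greedy hβ0 ht] at h
  rw [lyndonRight, lyndonLeft_prefixWord, length_prefixWord, div_mul_eq_mul_div]
  refine ⟨seqPartialValue_greedy_le hβ0 ht n, (lt_div_iff₀ (by linarith)).2 ?_⟩
  linarith

lemma AvoidsOnes.perSeq_prefixWord {x : ℕ → ℕ} (hx : AvoidsOnes m x) (hx0 : x 0 = 0)
    (hn : n ≠ 0) : AvoidsOnes m (perSeq (prefixWord x n)) := by
  intro a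
  have ha : a % n < n := Nat.mod_lt _ (by omega)
  obtain ⟨j, hj, hzero⟩ := hx (a % n)
  simp only [_root_.perSeq_prefixWord x hn]
  by_cases hjn : a % n + j < n
  · refine ⟨j, hj, ?_⟩
    rwa [← Nat.mod_add_mod, Nat.mod_eq_of_lt hjn]
  · refine ⟨n - a % n, by omega, ?_⟩
    rwa [← Nat.mod_add_mod, Nat.add_sub_cancel' ha.le, Nat.mod_self]

lemma seqLt_take_drop_prefixWord_greedy (hβ : 0 < β) (ht : 0 ≤ t) (hn : (Tbeta β)^[n] t < t)
    (hmin : ∀ i < n, t ≤ (Tbeta β)^[i] t) {i : ℕ} (hi : 1 ≤ i) (hin : i < n) :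
    seqLt (wordSeq ((prefixWord (greedy β t) n).take (n - i)))
      (wordSeq ((prefixWord (greedy β t) n).drop i)) := by
  have hdrop : (Tbeta β)^[n - i] ((Tbeta β)^[i] t) < (Tbeta β)^[n - i] t := by
    rw [← Function.iterate_add_apply, Nat.sub_add_cancel hin.le]
    exact hn.trans_le (hmin (n - i) (by omega))
  obtain ⟨k, hk, heq, hlt⟩ := exists_greedy_lt_of_iterate_Tbeta_lt hβ ht (hmin i hin) hdrop
  have htake_digit : ∀ j ≤ k, wordSeq ((prefixWord (greedy β t) n).take (n - i)) j =
      greedy β t j := fun j hj => by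
    rw [wordSeq_take _ (by omega), wordSeq_prefixWord _ (by omega)]
  have hdrop_digit : ∀ j ≤ k, wordSeq ((prefixWord (greedy β t) n).drop i) j =
      greedy β ((Tbeta β)^[i] t) j := fun j hj => by
    rw [wordSeq_drop, greedy_iterate_Tbeta, shiftN, shiftN, wordSeq_prefixWord _ (by omega)]
  refine ⟨k, fun j hj => ?_, ?_⟩
  · rw [htake_digit j hj.le, hdrop_digit j hj.le, heq j hj]
  · rwa [htake_digit k le_rfl, hdrop_digit k le_rfl]

lemma perSeq_prefixWord_greedy_ne_zeroOnes (hβ : 0 < β)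
    (hm : β ^ (m + 1) = ∑ i ∈ Finset.range (m + 1), β ^ i) (ht0 : 0 ≤ t) (ht : t < 1 - 1 / β)
    (hg0 : greedy β t 0 = 0) (hn : n ≠ 0) :
    perSeq (prefixWord (greedy β t) n) ≠ zeroOnes m := by
  intro heq
  have hdvd : m + 1 ∣ n := by
    rw [← zeroOnes_eq_zero_iff, ← heq, perSeq_prefixWord _ hn, Nat.mod_self, hg0]
  have hdigits : ∀ i < m + 1, zeroOnes m i = greedy β t i := by
    intro i hi
    have hin : i < n := hi.trans_le (Nat.le_of_dvd (by omega) hdvd)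
    rw [← heq, perSeq_prefixWord _ hn, Nat.mod_eq_of_lt hin]
  refine ht.not_ge ?_
  rw [← seqPartialValue_zeroOnes hβ hm, seqPartialValue_congr hdigits]
  exact seqPartialValue_greedy_le hβ ht0 _

lemma isBetaLyndon_prefixWord_greedy (hβ : 1 < β) (hβ2 : β ≤ 2) (hm1 : 1 ≤ m)
    (hm : β ^ (m + 1) = ∑ i ∈ Finset.range (m + 1), β ^ i) (ht0 : 0 ≤ t) (ht : t < 1 - 1 / β)
    (hn : (Tbeta β)^[n] t < t) (hmin : ∀ i < n, t ≤ (Tbeta β)^[i] t) :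
    IsBetaLyndon β (prefixWord (greedy β t) n) := by
  have hβ0 : 0 < β := by linarith
  have hn0 : n ≠ 0 := by rintro rfl; exact lt_irrefl t hn
  have ht1 : t ∈ Ico (0 : ℝ) 1 := ⟨ht0, ht.trans (sub_lt_self 1 (by positivity))⟩
  have hg1 : ∀ a ∈ prefixWord (greedy β t) n, a ≤ 1 :=
    List.forall_mem_map.2 fun i _ => greedy_le_one hβ0.le hβ2 ht1 i
  have hg0 : greedy β t 0 = 0 := by
    have hmul : β * (1 - 1 / β) = β - 1 := by field_simp
    exact greedy_zero_eq_zero ((mul_lt_mul_of_pos_left ht hβ0).trans_le (by linarith))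
  have hlen := length_prefixWord (greedy β t) n
  refine ⟨fun h => hn0 (by rw [← hlen, h, List.length_nil]), hg1, fun i hi hin => ?_,
    fun d hd k => ?_⟩
  · rw [hlen] at hin ⊢
    exact seqLt_take_drop_prefixWord_greedy hβ0 ht0 hn hmin hi hin
  · rw [hd.unique (isQuasiGreedy_onesZero hβ hm1 hm)]
    have hle := (((avoidsOnes_greedy hβ0 hm ht1).perSeq_prefixWord hg0 hn0).shiftN
      k).seqLe_onesZero fun i => perSeq_le hg1 (i + k)
    refine hle.resolve_left fun heq => perSeq_prefixWord_greedy_ne_zeroOnes hβ0 hm ht0 ht hg0 hn0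
      (eq_zeroOnes_of_shiftN_eq_onesZero hn0 ?_ ?_ heq)
    · simpa only [hlen] using shiftN_length_perSeq (prefixWord (greedy β t) n)
    · rw [perSeq_prefixWord _ hn0, Nat.zero_mod, hg0]

lemma exists_isBetaLyndon_of_iterate_Tbeta_lt (hβ : 1 < β) (hβ2 : β ≤ 2) (hm1 : 1 ≤ m)
    (hm : β ^ (m + 1) = ∑ i ∈ Finset.range (m + 1), β ^ i) (ht0 : 0 ≤ t) (ht : t < 1 - 1 / β)
    (h : ∃ n, (Tbeta β)^[n] t < t) :
    ∃ s, IsBetaLyndon β s ∧ t ∈ Ico (lyndonLeft β s) (lyndonRight β s) := by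
  classical
  have hn := Nat.find_spec h
  have hn0 : Nat.find h ≠ 0 := fun h0 => by
    rw [h0] at hn
    exact lt_irrefl t hn
  exact ⟨_, isBetaLyndon_prefixWord_greedy hβ hβ2 hm1 hm ht0 ht hn
    fun i hi => not_lt.1 (Nat.find_min h hi), mem_Ico_lyndon_prefixWord_greedy hβ ht0 hn0 hn⟩

lemma iterate_Tbeta_lt_self_of_mem_Ico_lyndon {d : ℕ → ℕ} (hβ : 1 < β) (hd : IsQuasiGreedy β d)
    (hs : IsBetaLyndon β s) (ht : t ∈ Ico (lyndonLeft β s) (lyndonRight β s)) :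
    (Tbeta β)^[s.length] t < t := by
  obtain ⟨hne, hs1, -, hlt⟩ := hs
  rw [lyndonLeft_eq_seqPartialValue, lyndonRight_eq_seqValue hβ hs1 hne] at ht
  exact iterate_Tbeta_lt_self_of_shiftN_eq hβ (perSeq_le hs1) (mt List.length_eq_zero_iff.1 hne)
    (shiftN_length_perSeq s) (seqValue_shiftN_le_one_of_seqLe hβ (perSeq_le hs1) hd.1 hd.2.2.1.le
      fun n => Or.inr (hlt d hd n)) ht.1 ht.2

lemma mem_lyndonUnionIco : t ∈ lyndonUnionIco β ↔
    ∃ s, IsBetaLyndon β s ∧ t ∈ Ico (lyndonLeft β s) (lyndonRight β s) := by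
  simp only [lyndonUnionIco, mem_iUnion, mem_ofPred_eq, exists_prop]

end Words

/-- For a multinacci `β ∈ (1,2)`,
`E_β = [0, 1 - 1/β) \ ⋃ [t_L, t_R)`, the union over all β-Lyndon intervals. -/
theorem stmt_1 (β : ℝ) (hβ : β ∈ Set.Ioo (1 : ℝ) 2) (hmulti : IsMultinacci β) :
    Eset β = Set.Ico (0 : ℝ) (1 - 1 / β) \ lyndonUnionIco β := by
  obtain ⟨hβ1, hβ2⟩ := hβ
  obtain ⟨m, hm1, hm⟩ := hmulti
  have hβ0 : 0 < β := by linarith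
  ext t
  rw [mem_Eset_iff hβ0.le]
  constructor
  · rintro ⟨ht, hret⟩
    refine ⟨⟨ht.1, not_le.1 fun hle => ?_⟩, fun hU => ?_⟩
    · obtain ⟨n, hn⟩ := exists_iterate_Tbeta_lt_self_of_one_sub_inv_le hβ1 hβ2.le hm hle ht.2
      exact hn.not_ge (hret n)
    · obtain ⟨s, hs, hts⟩ := mem_lyndonUnionIco.1 hU
      exact (iterate_Tbeta_lt_self_of_mem_Ico_lyndon hβ1 (isQuasiGreedy_onesZero hβ1 hm1 hm) hs
        hts).not_ge (hret s.length)
  · rintro ⟨⟨ht0, ht⟩, hU⟩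
    refine ⟨⟨ht0, ht.trans (sub_lt_self 1 (by positivity))⟩, ?_⟩
    by_contra! h
    exact hU (mem_lyndonUnionIco.2
      (exists_isBetaLyndon_of_iterate_Tbeta_lt hβ1 hβ2.le hm1 hm ht0 ht h))
end

section
/- Let β ∈ (1,2) be a multinacci number. Then for every t ∈ [0,1), dim_H(E_β ∩ [t, 1]) = dim_H K_β(t). -/
open Set Filter MeasureTheory

/-!
Since `1 = β⁻¹ + ⋯ + β^(-(m+1))`, cutting greedy expansions into blocks `1^j 0` with `j ≤ m`
identifies `[0, 1)`, in an order preserving way, with the sequences over `{0, …, m}` that do not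
end in `m^∞`: a full shift. By right continuity of `T_β`, a point `t` lies in `E_β` if and only if
it lies in `K_β(t)`, so that only `dim_H K_β(t) ≤ dim_H (E_β ∩ [t, 1])` is left to prove.

The points of `K_β(t)` are a block `1^j 0` followed by a sequence of blocks all of whose block
shifts have value in `[βt, 1)`. Let `e` be the lexicographically least sequence `x` of the latter
kind. Write a prefix of `e`, then a run of letters `m`, then any such `x` with a letter `m` inserted
after every `n` letters. The result is strictly smaller than all its proper shifts, because all
shifts of `e` and of `x` are at least `e` and each inserted `m` only raises them; preceded by the
digit `0`, it is the expansion of a point of `E_β ∩ [t, 1]`. Insertion lengthens expansions by a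
factor of at most about `1 + (m + 1) / n`, so the inverse map is Hölder with exponent
`n / (n + m + 1)`, which tends to `1` as `n → ∞`.
-/

namespace Multinacci

/-! ### Lexicographic order and insertion of the largest letter -/

lemma shiftN_shiftN (i j : ℕ) (s : ℕ → ℕ) : shiftN i (shiftN j s) = shiftN (i + j) s := by
  funext k
  simp only [shiftN, add_assoc]

lemma seqLt_or_seqLt_of_ne {x y : ℕ → ℕ} (hxy : x ≠ y) : seqLt x y ∨ seqLt y x := by
  classical
  have hex : ∃ k, x k ≠ y k := Function.ne_iff.1 hxy
  have hagree : ∀ i < Nat.find hex, x i = y i := fun i hi => not_not.1 (Nat.find_min hex hi)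
  exact (Nat.find_spec hex).lt_or_gt.imp (⟨_, hagree, ·⟩)
    (⟨_, fun i hi => (hagree i hi).symm, ·⟩)

lemma seqLe_iff {x y : ℕ → ℕ} : seqLe x y ↔ ∀ k, (∀ i < k, x i = y i) → x k ≤ y k := by
  constructor
  · rintro (rfl | ⟨l, hagree, hlt⟩) k hk
    · exact le_rfl
    · rcases lt_trichotomy k l with hkl | rfl | hlk
      · exact (hagree k hkl).le
      · exact hlt.le
      · exact absurd (hk l hlk) hlt.ne
  · intro hle
    by_contra hcon
    simp only [seqLe, not_or] at hcon
    rcases seqLt_or_seqLt_of_ne hcon.1 with hlt | ⟨k, hagree, hlt⟩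
    · exact hcon.2 hlt
    · exact (hle k fun i hi => (hagree i hi).symm).not_gt hlt

/-- The lexicographic infimum of a set of sequences. It need not belong to the set, but for
nonempty `S` all its prefixes are prefixes of elements of `S`. -/
noncomputable def lexInf (S : Set (ℕ → ℕ)) : ℕ → ℕ
  | n => sInf {v | ∃ s ∈ S, (∀ i, (_ : i < n) → s i = lexInf S i) ∧ s n = v}

lemma seqLe_lexInf {S : Set (ℕ → ℕ)} {s : ℕ → ℕ} (hs : s ∈ S) : seqLe (lexInf S) s := by
  refine seqLe_iff.2 fun k hk => ?_
  rw [lexInf]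
  exact Nat.sInf_le ⟨s, hs, fun i hi => (hk i hi).symm, rfl⟩

lemma exists_mem_eq_lexInf {S : Set (ℕ → ℕ)} (hS : S.Nonempty) (n : ℕ) :
    ∃ s ∈ S, ∀ i < n, s i = lexInf S i := by
  induction n with
  | zero => exact ⟨hS.some, hS.some_mem, fun i hi => absurd hi (Nat.not_lt_zero i)⟩
  | succ n ih =>
    obtain ⟨s, hs, hagree⟩ := ih
    obtain ⟨s', hs', hagree', hn⟩ :
        sInf {v | ∃ s ∈ S, (∀ i, (_ : i < n) → s i = lexInf S i) ∧ s n = v} ∈ _ :=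
      Nat.sInf_mem ⟨s n, s, hs, hagree, rfl⟩
    refine ⟨s', hs', fun i hi => ?_⟩
    rcases Nat.lt_succ_iff_lt_or_eq.1 hi with hi | rfl
    · exact hagree' i hi
    · rw [lexInf, hn]

lemma frequently_lexInf_lt {S : Set (ℕ → ℕ)} (hS : S.Nonempty) {m : ℕ}
    (hle : ∀ s ∈ S, ∀ i, s i ≤ m) (hlt : ∀ s ∈ S, ∃ᶠ i in atTop, s i < m) :
    ∃ᶠ i in atTop, lexInf S i < m := by
  refine frequently_atTop.2 fun N => ?_
  by_contra! hge
  obtain ⟨s, hs, hagree⟩ := exists_mem_eq_lexInf hS N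
  rcases seqLe_lexInf hs with heq | ⟨k, -, hk⟩
  · obtain ⟨i, hi, hsi⟩ := frequently_atTop.1 (hlt s hs) N
    exact (hge i hi).not_gt (heq ▸ hsi)
  · have hNk : N ≤ k := not_lt.1 fun hkN => hk.ne (hagree k hkN).symm
    exact (hle s hs k).not_gt ((hge k hNk).trans_lt hk)

/-- Inserting letters `m` into `x` from position `q` on raises it strictly: the first position
where `e` and `x` differ or an inserted `m` meets a smaller letter is at most `L`. -/
lemma seqLt_of_insert {e w x y : ℕ → ℕ} {m q L : ℕ} (hqL : q ≤ L) (heL : e L < m)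
    (hx : ∀ i, x i ≤ m) (hle : seqLe e x) (hw : ∀ i ≤ L, w i = e i) (hlo : ∀ j < q, y j = x j)
    (hhi : ∀ j, q ≤ j → j ≤ L → y j = m ∨ ∃ i, q ≤ i ∧ i < j ∧ y j = x i) : seqLt w y := by
  classical
  have hex : ∃ k, e k ≠ x k ∨ (q ≤ k ∧ x k < m) :=
    ⟨L, (ne_or_eq (e L) (x L)).imp_right fun h => ⟨hqL, h.symm.trans_lt heL⟩⟩
  obtain ⟨k, hk, hmin⟩ : ∃ k, (e k ≠ x k ∨ (q ≤ k ∧ x k < m)) ∧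
      ∀ i < k, e i = x i ∧ (q ≤ i → x i = m) := by
    refine ⟨Nat.find hex, Nat.find_spec hex, fun i hi => ?_⟩
    have hnot := Nat.find_min hex hi
    have := hx i
    grind
  have hkL : k ≤ L := by
    by_contra! hLk
    have := hmin L hLk
    grind
  have hek : e k ≤ x k := seqLe_iff.1 hle k fun i hi => (hmin i hi).1
  have hym : ∀ j, q ≤ j → j ≤ k → y j = m := by
    intro j hqj hjk
    rcases hhi j hqj (hjk.trans hkL) with hj | ⟨i, hqi, hij, hj⟩
    · exact hj
    · exact hj.trans ((hmin i (hij.trans_le hjk)).2 hqi)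
  refine ⟨k, fun i hi => ?_, ?_⟩
  · rw [hw i (hi.le.trans hkL), (hmin i hi).1]
    rcases lt_or_ge i q with hiq | hqi
    · exact (hlo i hiq).symm
    · rw [hym i hqi hi.le, (hmin i hi).2 hqi]
  · rw [hw k hkL]
    have := hx k
    rcases lt_or_ge k q with hkq | hqk
    · rw [hlo k hkq]
      grind
    · rw [hym k hqk le_rfl]
      grind

/-- The sequence starting with `e 0, …, e L` whose letter at position `φ p` is `x p` for all `p`,
and whose remaining letters are `m`. -/
noncomputable def insertMax (m L : ℕ) (e : ℕ → ℕ) (φ : ℕ → ℕ) (x : ℕ → ℕ) : ℕ → ℕ :=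
  Function.extend φ x fun i => if i ≤ L then e i else m

section InsertMax

variable {m L : ℕ} {e φ x : ℕ → ℕ}

lemma insertMax_apply (hφ : StrictMono φ) (p : ℕ) : insertMax m L e φ x (φ p) = x p :=
  hφ.injective.extend_apply _ _ _

lemma insertMax_of_notMem_range {i : ℕ} (hi : i ∉ range φ) (hL : L < i) :
    insertMax m L e φ x i = m :=
  (Function.extend_apply' _ _ _ hi).trans (if_neg hL.not_ge)

lemma insertMax_of_le (hφ : StrictMono φ) (hL : L < φ 0) {i : ℕ} (hi : i ≤ L) :
    insertMax m L e φ x i = e i := by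
  have hrange : ¬∃ p, φ p = i := by
    rintro ⟨p, rfl⟩
    exact ((hφ.monotone p.zero_le).trans hi).not_gt hL
  exact (Function.extend_apply' _ _ _ hrange).trans (if_pos hi)

lemma insertMax_of_lt (hφ : StrictMono φ) {i : ℕ} (hL : L < i) (hi : i < φ 0) :
    insertMax m L e φ x i = m := by
  refine insertMax_of_notMem_range ?_ hL
  rintro ⟨p, rfl⟩
  exact (hφ.monotone p.zero_le).not_gt hi

lemma insertMax_le (hφ : StrictMono φ) (he : ∀ i, e i ≤ m) (hx : ∀ i, x i ≤ m) (i : ℕ) :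
    insertMax m L e φ x i ≤ m := by
  by_cases hi : ∃ p, φ p = i
  · obtain ⟨p, rfl⟩ := hi
    exact (insertMax_apply hφ p).trans_le (hx p)
  · rw [insertMax, Function.extend_apply' _ _ _ hi]
    split_ifs
    exacts [he i, le_rfl]

lemma insertMax_congr (hφ : StrictMono φ) {x' : ℕ → ℕ} {d : ℕ} (hd : ∀ i < d, x i = x' i)
    {i : ℕ} (hi : i < φ d) : insertMax m L e φ x i = insertMax m L e φ x' i := by
  by_cases hrange : ∃ p, φ p = i
  · obtain ⟨p, rfl⟩ := hrange
    rw [insertMax_apply hφ, insertMax_apply hφ, hd p (hφ.lt_iff_lt.1 hi)]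
  · rw [insertMax, insertMax, Function.extend_apply' _ _ _ hrange,
      Function.extend_apply' _ _ _ hrange]

lemma frequently_insertMax_lt (hφ : StrictMono φ) (hx : ∃ᶠ i in atTop, x i < m) :
    ∃ᶠ i in atTop, insertMax m L e φ x i < m := by
  refine frequently_atTop.2 fun N => ?_
  obtain ⟨p, hp, hxp⟩ := frequently_atTop.1 hx N
  exact ⟨φ p, hp.trans (hφ.id_le p), (insertMax_apply hφ p).trans_lt hxp⟩

lemma seqLt_insertMax_shiftN_apply (hφ : StrictMono φ) (hL : L < φ 0)
    (hgap : ∀ p, φ p + L < φ (p + L)) (heL : e L < m) (hx : ∀ i, x i ≤ m) {p : ℕ}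
    (hex : seqLe e (shiftN p x)) :
    seqLt (insertMax m L e φ x) (shiftN (φ p) (insertMax m L e φ x)) := by
  classical
  have hjump : ∃ j, φ p + j < φ (p + j) := ⟨L, hgap p⟩
  have hgrow : ∀ j i, φ (p + j) + i ≤ φ (p + j + i) := fun j i => by
    induction i with
    | zero => exact le_rfl
    | succ i ih => exact Nat.succ_le_of_lt (ih.trans_lt (hφ (Nat.lt_succ_self _)))
  obtain ⟨q, hq, hmin⟩ : ∃ q, φ p + q < φ (p + q) ∧ ∀ j < q, φ (p + j) = φ p + j :=
    ⟨Nat.find hjump, Nat.find_spec hjump, fun j hj =>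
      (not_lt.1 (Nat.find_min hjump hj)).antisymm (hgrow 0 j)⟩
  have hqL : q ≤ L := by
    by_contra! hLq
    exact (hgap p).ne (hmin L hLq).symm
  refine seqLt_of_insert hqL heL (fun i => hx (i + p)) hex
    (fun i hi => insertMax_of_le hφ hL hi) (fun j hj => ?_) fun j hqj _ => ?_
  · simp only [shiftN]
    rw [add_comm j, ← hmin j hj, insertMax_apply hφ, add_comm]
  · by_cases hrange : j + φ p ∈ range φ
    · obtain ⟨r, hr⟩ := hrange
      obtain ⟨i, rfl⟩ := Nat.exists_eq_add_of_le (hφ.le_iff_le.1 (hr ▸ Nat.le_add_left (φ p) j))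
      have hqi : q ≤ i := by
        by_contra! hiq
        have := hmin i hiq
        omega
      have hij : φ p + i < φ (p + i) := by
        have := hgrow q (i - q)
        rw [add_assoc, Nat.add_sub_cancel' hqi] at this
        omega
      refine Or.inr ⟨i, hqi, by omega, ?_⟩
      simp only [shiftN]
      rw [← hr, insertMax_apply hφ, add_comm]
    · exact Or.inl (insertMax_of_notMem_range hrange
        ((hL.trans_le (hφ.monotone p.zero_le)).trans_le (Nat.le_add_left _ _)))

lemma seqLt_insertMax_shiftN (hφ : StrictMono φ) (hL : 2 * L < φ 0)
    (hgap : ∀ p, φ p + L < φ (p + L)) (heL : e L < m) (he : ∀ i, e i ≤ m) (hx : ∀ i, x i ≤ m)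
    (hee : ∀ i, seqLe e (shiftN i e)) (hex : ∀ i, seqLe e (shiftN i x)) {i : ℕ} (hi : i ≠ 0) :
    seqLt (insertMax m L e φ x) (shiftN i (insertMax m L e φ x)) := by
  have hL' : L < φ 0 := by omega
  rcases le_or_gt i L with hiL | hLi
  · refine seqLt_of_insert (q := L - i + 1) (by omega) heL (fun j => he (j + i)) (hee i)
      (fun j hj => insertMax_of_le hφ hL' hj) (fun j hj => ?_) fun j hqj hjL => Or.inl ?_
    · exact insertMax_of_le hφ hL' (by omega)
    · exact insertMax_of_lt hφ (by omega) (by omega)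
  · by_cases hrange : i ∈ range φ
    · obtain ⟨p, rfl⟩ := hrange
      exact seqLt_insertMax_shiftN_apply hφ hL' hgap heL hx (hex p)
    · refine ⟨0, fun j hj => absurd hj j.not_lt_zero, ?_⟩
      have he0 : e 0 ≤ e L := by
        simpa only [shiftN, zero_add] using
          seqLe_iff.1 (hee L) 0 fun j hj => absurd hj j.not_lt_zero
      rw [insertMax_of_le hφ hL' L.zero_le, shiftN, zero_add,
        insertMax_of_notMem_range hrange hLi]
      exact he0.trans_lt heL

lemma seqLt_insertMax (hφ : StrictMono φ) {l : ℕ} (hLl : L < l) (hl : l < φ 0) (hel : e l < m)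
    (he : ∀ i, e i ≤ m) : seqLt e (insertMax m L e φ x) :=
  seqLt_of_insert (q := L + 1) hLl hel he (Or.inl rfl) (fun _ _ => rfl)
    (fun _ hj => insertMax_of_le hφ (hLl.trans hl) (Nat.lt_succ_iff.1 hj))
    fun _ hqj hjl => Or.inl (insertMax_of_lt hφ hqj (hjl.trans_lt hl))

end InsertMax

/-- The positions that skip one place after every `n` letters, starting from `N`. -/
def stretch (N n d : ℕ) : ℕ := N + d + d / n

lemma strictMono_stretch (N n : ℕ) : StrictMono (stretch N n) :=
  strictMono_nat_of_lt_succ fun d => by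
    have := Nat.div_le_div_right (c := n) (Nat.le_add_right d 1)
    simp only [stretch]
    omega

lemma stretch_add_lt {n L : ℕ} (hn : 0 < n) (hnL : n ≤ L) (N p : ℕ) :
    stretch N n p + L < stretch N n (p + L) := by
  have hstep : p / n + 1 ≤ (p + L) / n := by
    rw [← Nat.add_div_right p hn]
    exact Nat.div_le_div_right (Nat.add_le_add_left hnL p)
  simp only [stretch]
  omega

/-- The length of the binary word `1^(s 0) 0 ⋯ 1^(s (d-1)) 0`. -/
def blockLen (s : ℕ → ℕ) (d : ℕ) : ℕ := ∑ i ∈ Finset.range d, (s i + 1)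

lemma blockLen_succ (s : ℕ → ℕ) (d : ℕ) : blockLen s (d + 1) = blockLen s d + (s d + 1) :=
  Finset.sum_range_succ _ _

lemma blockLen_add (s : ℕ → ℕ) (d k : ℕ) :
    blockLen s (d + k) = blockLen s d + blockLen (shiftN d s) k := by
  simp only [blockLen, Finset.sum_range_add, shiftN, add_comm]

lemma blockLen_congr {s s' : ℕ → ℕ} {d : ℕ} (h : ∀ i < d, s i = s' i) :
    blockLen s d = blockLen s' d :=
  Finset.sum_congr rfl fun i hi => by rw [h i (Finset.mem_range.1 hi)]

lemma le_blockLen (s : ℕ → ℕ) (d : ℕ) : d ≤ blockLen s d := by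
  simpa [blockLen] using Finset.card_nsmul_le_sum (Finset.range d) (fun i => s i + 1) 1
    fun i _ => Nat.le_add_left 1 (s i)

lemma blockLen_le {s : ℕ → ℕ} {m : ℕ} (hs : ∀ i, s i ≤ m) (d : ℕ) :
    blockLen s d ≤ (m + 1) * d := by
  simpa [blockLen, mul_comm] using Finset.sum_le_card_nsmul (Finset.range d) (fun i => s i + 1)
    (m + 1) fun i _ => Nat.add_le_add_right (hs i) 1

lemma blockLen_add_le_of_comp {x y φ : ℕ → ℕ} {m : ℕ} (hφ : StrictMono φ) (hy : ∀ i, y i ≤ m)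
    (hxy : ∀ p, y (φ p) = x p) (d : ℕ) :
    blockLen y (φ d) + (m + 1) * d ≤ blockLen x d + (m + 1) * φ d := by
  induction d with
  | zero => simpa [blockLen] using blockLen_le hy (φ 0)
  | succ d ih =>
    obtain ⟨k, hk⟩ := Nat.exists_eq_add_of_le (Nat.succ_le_of_lt (hφ d.lt_succ_self))
    have htail := blockLen_le (s := shiftN (φ d + 1) y) (fun i => hy _) k
    rw [hk, blockLen_add, blockLen_succ, blockLen_succ, hxy]
    nlinarith

/-! ### Coding by blocks of ones -/

/-- The value `b + b² + ⋯ + b^k` of the word `1^k` in base `β = b⁻¹`. -/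
noncomputable def onesSum (b : ℝ) (k : ℕ) : ℝ := ∑ i ∈ Finset.range k, b ^ (i + 1)

/-- The number whose expansion in base `β = b⁻¹` is that of `z` preceded by `1^j 0`. -/
noncomputable def block (b : ℝ) (j : ℕ) (z : ℝ) : ℝ := onesSum b j + b ^ (j + 1) * z

/-- The number with expansion `1^(s 0) 0 1^(s 1) 0 1^(s 2) 0 ⋯` in base `β = b⁻¹`. -/
noncomputable def code (b : ℝ) (s : ℕ → ℕ) : ℝ := ∑' d, b ^ blockLen s d * onesSum b (s d)

lemma onesSum_succ (b : ℝ) (k : ℕ) : onesSum b (k + 1) = onesSum b k + b ^ (k + 1) :=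
  Finset.sum_range_succ _ _

lemma onesSum_mono {b : ℝ} (hb : 0 ≤ b) : Monotone (onesSum b) :=
  monotone_nat_of_le_succ fun k => by
    rw [onesSum_succ]
    exact le_add_of_nonneg_right (pow_nonneg hb _)

lemma onesSum_nonneg {b : ℝ} (hb : 0 ≤ b) (k : ℕ) : 0 ≤ onesSum b k :=
  Finset.sum_nonneg fun _ _ => pow_nonneg hb _

lemma le_onesSum {b : ℝ} (hb : 0 ≤ b) {k : ℕ} (hk : 1 ≤ k) : b ≤ onesSum b k := by
  simpa [onesSum] using onesSum_mono hb hk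

lemma onesSum_succ' (b : ℝ) (k : ℕ) : onesSum b (k + 1) = b * (1 + onesSum b k) := by
  simp only [onesSum, Finset.sum_range_succ' _ k, Finset.mul_sum, mul_add, pow_succ', pow_zero]
  ring

lemma block_succ (b : ℝ) (j : ℕ) (z : ℝ) : block b (j + 1) z = b * (1 + block b j z) := by
  rw [block, onesSum_succ', block]
  ring

lemma block_mem_Ico {b z : ℝ} (hb : 0 < b) {j : ℕ} (hj : onesSum b (j + 1) ≤ 1)
    (hz : z ∈ Ico 0 1) : block b j z ∈ Ico 0 1 := by
  have hpow := pow_pos hb (j + 1)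
  refine ⟨add_nonneg (onesSum_nonneg hb.le j) (mul_nonneg hpow.le hz.1), ?_⟩
  calc block b j z = onesSum b j + b ^ (j + 1) * z := rfl
    _ < onesSum b j + b ^ (j + 1) * 1 := by
        gcongr
        exact hz.2
    _ = onesSum b (j + 1) := by rw [mul_one, onesSum_succ]
    _ ≤ 1 := hj

/-- `b` is the reciprocal of the multinacci number `β` given by `β^(m+1) = β^m + ⋯ + β + 1`. -/
structure IsMultinacciRatio (b : ℝ) (m : ℕ) : Prop where
  pos : 0 < b
  lt_one : b < 1
  onesSum_eq_one : onesSum b (m + 1) = 1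

/-- The sequences coding, by blocks `1^j 0` with `j ≤ m`, those points all of whose block
shifts have value in `[u, 1)`. -/
def survivorCodes (b : ℝ) (m : ℕ) (u : ℝ) : Set (ℕ → ℕ) :=
  {s | (∀ i, s i ≤ m) ∧ ∀ i, code b (shiftN i s) ∈ Ico u 1}

namespace IsMultinacciRatio

variable {b : ℝ} {m : ℕ} {s s' : ℕ → ℕ}

lemma one_le (h : IsMultinacciRatio b m) : 1 ≤ m := by
  by_contra! hm
  obtain rfl : m = 0 := by omega
  have := h.onesSum_eq_one
  simp only [onesSum, zero_add, Finset.sum_range_one, pow_one] at this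
  exact h.lt_one.ne this

lemma onesSum_succ_le_one (h : IsMultinacciRatio b m) {j : ℕ} (hj : j ≤ m) :
    onesSum b (j + 1) ≤ 1 :=
  (onesSum_mono h.pos.le (Nat.succ_le_succ hj)).trans_eq h.onesSum_eq_one

lemma sum_code_le (h : IsMultinacciRatio b m) (hs : ∀ i, s i ≤ m) (d : ℕ) :
    ∑ i ∈ Finset.range d, b ^ blockLen s i * onesSum b (s i) ≤ 1 - b ^ blockLen s d := by
  induction d with
  | zero => simp [blockLen]
  | succ d ih =>
    have hd : onesSum b (s d) + b ^ (s d + 1) ≤ 1 :=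
      (onesSum_succ b (s d)).symm.trans_le (h.onesSum_succ_le_one (hs d))
    rw [Finset.sum_range_succ, blockLen_succ, pow_add]
    nlinarith [pow_pos h.pos (blockLen s d)]

lemma code_term_nonneg (h : IsMultinacciRatio b m) (s : ℕ → ℕ) (d : ℕ) :
    0 ≤ b ^ blockLen s d * onesSum b (s d) :=
  mul_nonneg (pow_nonneg h.pos.le _) (onesSum_nonneg h.pos.le _)

lemma sum_code_le_one (h : IsMultinacciRatio b m) (hs : ∀ i, s i ≤ m) (d : ℕ) :
    ∑ i ∈ Finset.range d, b ^ blockLen s i * onesSum b (s i) ≤ 1 :=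
  (h.sum_code_le hs d).trans (sub_le_self _ (pow_nonneg h.pos.le _))

lemma summable_code (h : IsMultinacciRatio b m) (hs : ∀ i, s i ≤ m) :
    Summable fun d => b ^ blockLen s d * onesSum b (s d) :=
  summable_of_sum_range_le (h.code_term_nonneg s) (h.sum_code_le_one hs)

lemma code_nonneg (h : IsMultinacciRatio b m) (s : ℕ → ℕ) : 0 ≤ code b s :=
  tsum_nonneg (h.code_term_nonneg s)

lemma code_le_one (h : IsMultinacciRatio b m) (hs : ∀ i, s i ≤ m) : code b s ≤ 1 :=
  Real.tsum_le_of_sum_range_le (h.code_term_nonneg s) (h.sum_code_le_one hs)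

lemma code_eq_sum_add (h : IsMultinacciRatio b m) (hs : ∀ i, s i ≤ m) (d : ℕ) :
    code b s = ∑ i ∈ Finset.range d, b ^ blockLen s i * onesSum b (s i) +
      b ^ blockLen s d * code b (shiftN d s) := by
  rw [code, ← (h.summable_code hs).sum_add_tsum_nat_add d, code, ← tsum_mul_left]
  congr 1
  refine tsum_congr fun i => ?_
  rw [add_comm i d, blockLen_add, pow_add, mul_assoc, shiftN, add_comm]

lemma code_shiftN (h : IsMultinacciRatio b m) (hs : ∀ i, s i ≤ m) (d : ℕ) :
    code b (shiftN d s) = block b (s d) (code b (shiftN (d + 1) s)) := by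
  have hcode := h.code_eq_sum_add (s := shiftN d s) (fun i => hs _) 1
  rw [shiftN_shiftN, add_comm 1 d] at hcode
  simpa [blockLen, block, shiftN] using hcode

lemma pow_le_code (h : IsMultinacciRatio b m) (hs : ∀ i, s i ≤ m) {k : ℕ} (hk : 1 ≤ s k) :
    b ^ ((m + 1) * k + 1) ≤ code b s :=
  calc b ^ ((m + 1) * k + 1) = b ^ ((m + 1) * k) * b := pow_succ _ _
    _ ≤ b ^ blockLen s k * onesSum b (s k) :=
        mul_le_mul (pow_le_pow_of_le_one h.pos.le h.lt_one.le (blockLen_le hs k))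
          (le_onesSum h.pos.le hk) h.pos.le (pow_nonneg h.pos.le _)
    _ ≤ code b s := (h.summable_code hs).le_tsum k fun d _ => h.code_term_nonneg s d

lemma code_sub_code (h : IsMultinacciRatio b m) (hs : ∀ i, s i ≤ m) (hs' : ∀ i, s' i ≤ m)
    {d : ℕ} (hd : ∀ i < d, s i = s' i) :
    code b s' - code b s =
      b ^ blockLen s d * (code b (shiftN d s') - code b (shiftN d s)) := by
  have hsum : ∑ i ∈ Finset.range d, b ^ blockLen s i * onesSum b (s i) =
      ∑ i ∈ Finset.range d, b ^ blockLen s' i * onesSum b (s' i) := by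
    refine Finset.sum_congr rfl fun i hi => ?_
    have hid := Finset.mem_range.1 hi
    rw [hd i hid, blockLen_congr fun j hj => hd j (hj.trans hid)]
  rw [h.code_eq_sum_add hs d, h.code_eq_sum_add hs' d, hsum, blockLen_congr hd]
  ring

lemma abs_code_sub_code_le (h : IsMultinacciRatio b m) (hs : ∀ i, s i ≤ m)
    (hs' : ∀ i, s' i ≤ m) {d : ℕ} (hd : ∀ i < d, s i = s' i) :
    |code b s' - code b s| ≤ b ^ blockLen s d := by
  have hdiff : |code b (shiftN d s') - code b (shiftN d s)| ≤ 1 :=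
    (abs_sub_le_of_nonneg_of_le (h.code_nonneg _) (h.code_le_one fun i => hs' _)
      (h.code_nonneg _) (h.code_le_one fun i => hs _))
  rw [h.code_sub_code hs hs' hd, abs_mul, abs_of_pos (pow_pos h.pos _)]
  exact mul_le_of_le_one_right (pow_nonneg h.pos.le _) hdiff

lemma le_code_sub_code (h : IsMultinacciRatio b m) (hs : ∀ i, s i ≤ m) (hs' : ∀ i, s' i ≤ m)
    {d : ℕ} (hd : ∀ i < d, s i = s' i) (hlt : s d < s' d) :
    b ^ blockLen s d * (b ^ (m + 1) * code b (shiftN (d + 1) s')) ≤ code b s' - code b s := by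
  rw [h.code_sub_code hs hs' hd]
  refine mul_le_mul_of_nonneg_left ?_ (pow_nonneg h.pos.le _)
  have hupper : code b (shiftN d s) ≤ onesSum b (s' d) := by
    rw [h.code_shiftN hs d, block]
    refine le_trans ?_ (onesSum_mono h.pos.le (Nat.succ_le_of_lt hlt))
    rw [Nat.succ_eq_add_one, onesSum_succ]
    gcongr
    exact mul_le_of_le_one_right (pow_nonneg h.pos.le _) (h.code_le_one fun i => hs _)
  have hlower : onesSum b (s' d) + b ^ (m + 1) * code b (shiftN (d + 1) s') ≤
      code b (shiftN d s') := by
    rw [h.code_shiftN hs' d, block]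
    exact add_le_add le_rfl (mul_le_mul_of_nonneg_right
      (pow_le_pow_of_le_one h.pos.le h.lt_one.le (Nat.succ_le_succ (hs' d))) (h.code_nonneg _))
  linarith

lemma code_le_code (h : IsMultinacciRatio b m) (hs : ∀ i, s i ≤ m) (hs' : ∀ i, s' i ≤ m)
    (hle : seqLe s s') : code b s ≤ code b s' := by
  rcases hle with rfl | ⟨d, hd, hlt⟩
  · exact le_rfl
  · refine sub_nonneg.1 (le_trans ?_ (h.le_code_sub_code hs hs' hd hlt))
    have := h.code_nonneg (shiftN (d + 1) s')
    have := h.pos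
    positivity

lemma code_const (h : IsMultinacciRatio b m) : code b (fun _ => m) = 1 := by
  have hfix : code b (fun _ => m) = onesSum b m + b ^ (m + 1) * code b (fun _ => m) :=
    h.code_shiftN (fun _ => le_rfl) 0
  have hone : onesSum b m + b ^ (m + 1) = 1 := (onesSum_succ b m).symm.trans h.onesSum_eq_one
  have hpow : b ^ (m + 1) < 1 := pow_lt_one₀ h.pos.le h.lt_one m.succ_ne_zero
  nlinarith

lemma code_lt_one_iff (h : IsMultinacciRatio b m) (hs : ∀ i, s i ≤ m) :
    code b s < 1 ↔ ∃ i, s i < m := by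
  constructor
  · intro hlt
    by_contra! hge
    obtain rfl : s = fun _ => m := funext fun i => (hs i).antisymm (hge i)
    exact hlt.ne h.code_const
  · rintro ⟨i, hi⟩
    have hne : s ≠ fun _ => m := fun heq => hi.ne (congrFun heq i)
    obtain ⟨d, hd, hlt⟩ := (seqLt_or_seqLt_of_ne hne).resolve_right
      fun ⟨d, _, hd⟩ => (hs d).not_gt hd
    have hsub := h.le_code_sub_code hs (fun _ => le_rfl) hd hlt
    rw [h.code_const] at hsub
    refine sub_pos.1 (lt_of_lt_of_le ?_ hsub)
    have hone : code b (shiftN (d + 1) fun _ => m) = 1 := h.code_const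
    have := h.pos
    rw [hone]
    positivity

lemma code_eq_of_eq_block (h : IsMultinacciRatio b m) (hs : ∀ i, s i ≤ m) {z : ℕ → ℝ}
    (hz : ∀ i, z i ∈ Icc 0 1) (hblock : ∀ i, z i = block b (s i) (z (i + 1))) :
    code b s = z 0 := by
  have hsum : ∀ d, ∑ i ∈ Finset.range d, b ^ blockLen s i * onesSum b (s i) =
      z 0 - b ^ blockLen s d * z d := by
    intro d
    induction d with
    | zero => simp [blockLen]
    | succ d ih =>
      rw [Finset.sum_range_succ, ih, blockLen_succ, hblock d, block]
      ring
  have htail : Tendsto (fun d => b ^ blockLen s d * z d) atTop (nhds 0) :=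
    squeeze_zero (fun d => mul_nonneg (pow_nonneg h.pos.le _) (hz d).1)
      (fun d => (mul_le_of_le_one_right (pow_nonneg h.pos.le _) (hz d).2).trans
        (pow_le_pow_of_le_one h.pos.le h.lt_one.le (le_blockLen s d)))
      (tendsto_pow_atTop_nhds_zero_of_lt_one h.pos.le h.lt_one)
  refine tendsto_nhds_unique (h.summable_code hs).hasSum.tendsto_sum_nat ?_
  simpa only [hsum, sub_zero] using htail.const_sub (z 0)

lemma exists_code_eq (h : IsMultinacciRatio b m) {B : Set ℝ} (hB : B ⊆ Icc 0 1)
    (hstep : ∀ y ∈ B, ∃ j ≤ m, ∃ z ∈ B, y = block b j z) {y : ℝ} (hy : y ∈ B) :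
    ∃ s : ℕ → ℕ, (∀ i, s i ≤ m) ∧ (∀ i, code b (shiftN i s) ∈ B) ∧ code b s = y := by
  choose! j hj next hnext hblock using hstep
  have hmem : ∀ i, next^[i] y ∈ B := fun i => by
    induction i with
    | zero => exact hy
    | succ i ih =>
      rw [Function.iterate_succ_apply']
      exact hnext _ ih
  have hs : ∀ i, j (next^[i] y) ≤ m := fun i => hj _ (hmem i)
  have hcode : ∀ i, code b (shiftN i fun k => j (next^[k] y)) = next^[i] y := fun i => by
    refine (h.code_eq_of_eq_block (z := fun k => next^[k + i] y) (fun k => hs _)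
      (fun k => hB (hmem _)) fun k => ?_).trans (by rw [zero_add])
    rw [add_right_comm, Function.iterate_succ_apply']
    exact hblock _ (hmem _)
  exact ⟨fun i => j (next^[i] y), hs, fun i => (hcode i).symm ▸ hmem i, hcode 0⟩

lemma shiftN_mem_survivorCodes {u : ℝ} (hs : s ∈ survivorCodes b m u) (i : ℕ) :
    shiftN i s ∈ survivorCodes b m u :=
  ⟨fun _ => hs.1 _, fun k => (shiftN_shiftN k i s).symm ▸ hs.2 _⟩

lemma frequently_lt_of_mem_survivorCodes (h : IsMultinacciRatio b m) {u : ℝ}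
    (hs : s ∈ survivorCodes b m u) : ∃ᶠ i in atTop, s i < m :=
  frequently_atTop.2 fun N => by
    obtain ⟨i, hi⟩ := (h.code_lt_one_iff fun i => hs.1 (i + N)).1 (hs.2 N).2
    exact ⟨i + N, Nat.le_add_left N i, hi⟩

lemma code_shiftN_lt_one (h : IsMultinacciRatio b m) (hs : ∀ i, s i ≤ m)
    (hlt : ∃ᶠ i in atTop, s i < m) (N : ℕ) : code b (shiftN N s) < 1 := by
  obtain ⟨i, hi, hsi⟩ := frequently_atTop.1 hlt N
  refine (h.code_lt_one_iff fun k => hs _).2 ⟨i - N, ?_⟩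
  rwa [Nat.sub_add_cancel hi]

lemma lexInf_mem_survivorCodes (h : IsMultinacciRatio b m) {u : ℝ}
    (hne : (survivorCodes b m u).Nonempty) :
    lexInf (survivorCodes b m u) ∈ survivorCodes b m u := by
  set e := lexInf (survivorCodes b m u)
  have he : ∀ i, e i ≤ m := fun i => by
    obtain ⟨s, hs, hagree⟩ := exists_mem_eq_lexInf hne (i + 1)
    exact (hagree i i.lt_succ_self).symm.trans_le (hs.1 i)
  refine ⟨he, fun i => ⟨?_, h.code_shiftN_lt_one he (frequently_lexInf_lt hne (fun _ hs => hs.1)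
    fun _ => h.frequently_lt_of_mem_survivorCodes) i⟩⟩
  have happrox : ∀ d, u ≤ code b (shiftN i e) + b ^ d := fun d => by
    obtain ⟨s, hs, hagree⟩ := exists_mem_eq_lexInf hne (d + i)
    have hclose := h.abs_code_sub_code_le (s := shiftN i e) (s' := shiftN i s) (d := d)
      (fun k => he _) (fun k => hs.1 _) fun k hk => (hagree _ (Nat.add_lt_add_right hk i)).symm
    have hpow := pow_le_pow_of_le_one h.pos.le h.lt_one.le (le_blockLen (shiftN i e) d)
    linarith [(abs_le.1 hclose).2, (hs.2 i).1]
  simpa using ge_of_tendsto'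
    ((tendsto_pow_atTop_nhds_zero_of_lt_one h.pos.le h.lt_one).const_add _) happrox

end IsMultinacciRatio

/-! ### The survivor sets and the bifurcation set -/

open scoped Topology

lemma tendsto_fract_nhdsGE (x : ℝ) : Tendsto Int.fract (𝓝[≥] x) (𝓝[≥] Int.fract x) := by
  have hfract : (fun y => y - ⌊x⌋) =ᶠ[𝓝[≥] x] Int.fract :=
    ((tendsto_floor_right_pure_floor x).eventually (eventually_pure.2 rfl)).mono
      fun y (hy : ⌊x⌋ = ⌊y⌋) => by rw [Int.fract, hy]
  refine Tendsto.congr' hfract (tendsto_nhdsWithin_iff.2 ⟨?_, ?_⟩)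
  · exact (tendsto_id.sub_const _).mono_left nhdsWithin_le_nhds
  · exact eventually_mem_nhdsWithin.mono fun y (hy : x ≤ y) => sub_le_sub_right hy (⌊x⌋ : ℝ)

variable {β : ℝ}

lemma tendsto_Tbeta (hβ : 0 ≤ β) (x : ℝ) : Tendsto (Tbeta β) (𝓝[≥] x) (𝓝[≥] Tbeta β x) :=
  (tendsto_fract_nhdsGE (β * x)).comp <| tendsto_nhdsWithin_iff.2
    ⟨((continuous_const_mul β).tendsto x).mono_left nhdsWithin_le_nhds,
      eventually_mem_nhdsWithin.mono fun _ hy => mul_le_mul_of_nonneg_left hy hβ⟩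

lemma tendsto_iterate_Tbeta (hβ : 0 ≤ β) (n : ℕ) (x : ℝ) :
    Tendsto (Tbeta β)^[n] (𝓝[≥] x) (𝓝[≥] (Tbeta β)^[n] x) := by
  induction n with
  | zero => exact tendsto_id
  | succ n ih =>
    rw [Function.iterate_succ', Function.comp_apply]
    exact (tendsto_Tbeta hβ _).comp ih

/-- If `t` fails to survive its own hole, then by right continuity so do all points slightly
above `t`, so that the survivor set does not change there. -/
lemma mem_Eset_iff (hβ : 0 ≤ β) {t : ℝ} : t ∈ Eset β ↔ t ∈ Kset β t := by
  constructor
  · rintro ⟨ht, hne⟩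
    refine ⟨ht, ?_⟩
    by_contra! ⟨n, hn⟩
    have hnhds : {y | (Tbeta β)^[n] y < t} ∈ 𝓝[≥] t :=
      (tendsto_iterate_Tbeta hβ n t).eventually_mem (mem_nhdsWithin_of_mem_nhds (Iio_mem_nhds hn))
    obtain ⟨u, ⟨htu, hu⟩, hsub⟩ :=
      (mem_nhdsGE_iff_exists_mem_Ioc_Ico_subset (show t < (t + 1) / 2 by linarith [ht.2])).1 hnhds
    refine hne u htu (by linarith [ht.2]) (Subset.antisymm ?_ ?_)
    · exact fun x hx => ⟨hx.1, fun k => htu.le.trans (hx.2 k)⟩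
    · refine fun x hx => ⟨hx.1, fun k => ?_⟩
      by_contra! hk
      refine (hx.2 (n + k)).not_gt ?_
      rw [Function.iterate_add_apply]
      exact hsub ⟨hx.2 k, hk⟩
  · exact fun ht => ⟨ht.1, fun t' htt' _ heq => ((heq ▸ ht : t ∈ Kset β t').2 0).not_gt htt'⟩

lemma Eset_inter_Icc_subset (hβ : 0 ≤ β) (t : ℝ) : Eset β ∩ Icc t 1 ⊆ Kset β t :=
  fun _ hx => ⟨hx.1.1, fun n => hx.2.1.trans (((mem_Eset_iff hβ).1 hx.1).2 n)⟩

lemma Tbeta_inv_mul (hβ : β ≠ 0) {z : ℝ} (hz : z ∈ Ico 0 1) : Tbeta β (β⁻¹ * z) = z := by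
  rw [Tbeta, mul_inv_cancel_left₀ hβ, Int.fract_eq_self]
  exact hz

lemma block_zero (b z : ℝ) : block b 0 z = b * z := by
  simp [block, onesSum]

lemma mul_le_block {b z : ℝ} (hb : 0 ≤ b) (hz : z ∈ Icc 0 1) (j : ℕ) : b * z ≤ block b j z := by
  cases j with
  | zero => exact (block_zero b z).ge
  | succ j =>
    rw [block_succ]
    have : 0 ≤ block b j z :=
      add_nonneg (onesSum_nonneg hb j) (mul_nonneg (pow_nonneg hb _) hz.1)
    exact mul_le_mul_of_nonneg_left (by linarith [hz.2]) hb

lemma Tbeta_block_succ (hβ : 0 < β) {j : ℕ} (hj : onesSum β⁻¹ (j + 1) ≤ 1) {z : ℝ}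
    (hz : z ∈ Ico 0 1) : Tbeta β (block β⁻¹ (j + 1) z) = block β⁻¹ j z := by
  rw [Tbeta, block_succ, mul_inv_cancel_left₀ hβ.ne', Int.fract_one_add, Int.fract_eq_self]
  exact block_mem_Ico (inv_pos.2 hβ) hj hz

lemma iterate_Tbeta_block (hβ : 0 < β) {j : ℕ} (hj : onesSum β⁻¹ j ≤ 1) {z : ℝ}
    (hz : z ∈ Ico 0 1) : (Tbeta β)^[j] (block β⁻¹ j z) = β⁻¹ * z := by
  induction j with
  | zero => exact block_zero _ z
  | succ j ih =>
    rw [Function.iterate_succ_apply, Tbeta_block_succ hβ hj hz,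
      ih ((onesSum_mono (inv_nonneg.2 hβ.le) j.le_succ).trans hj)]

lemma exists_eq_block_or_onesSum_le (hβ : β ∈ Ioc 0 2) (k : ℕ) {y : ℝ} (hy : y ∈ Ico 0 1) :
    (∃ j < k, ∃ z ∈ Ico (0 : ℝ) 1, y = block β⁻¹ j z) ∨ onesSum β⁻¹ k ≤ y := by
  induction k generalizing y with
  | zero => exact Or.inr (by simpa [onesSum] using hy.1)
  | succ k ih =>
    have hβy : 0 ≤ β * y := mul_nonneg hβ.1.le hy.1
    rcases lt_or_ge (β * y) 1 with hlt | hge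
    · refine Or.inl ⟨0, k.succ_pos, β * y, ⟨hβy, hlt⟩, ?_⟩
      rw [block_zero, inv_mul_cancel_left₀ hβ.1.ne']
    · obtain ⟨v, hv, rfl⟩ : ∃ v ∈ Ico (0 : ℝ) 1, y = β⁻¹ * (1 + v) := by
        refine ⟨β * y - 1, ⟨sub_nonneg.2 hge, ?_⟩, ?_⟩
        · nlinarith [hβ.2, hy.1, hy.2]
        · rw [add_sub_cancel, inv_mul_cancel_left₀ hβ.1.ne']
      rcases ih hv with ⟨j, hj, z, hz, rfl⟩ | hle
      · exact Or.inl ⟨j + 1, Nat.succ_lt_succ hj, z, hz, (block_succ _ _ _).symm⟩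
      · refine Or.inr ?_
        rw [onesSum_succ']
        exact mul_le_mul_of_nonneg_left (add_le_add le_rfl hle) (inv_nonneg.2 hβ.1.le)

namespace IsMultinacciRatio

variable {m : ℕ} {s : ℕ → ℕ}

lemma exists_iterate_Tbeta_eq_block (h : IsMultinacciRatio β⁻¹ m) (hs : ∀ i, s i ≤ m)
    (hlt : ∀ i, code β⁻¹ (shiftN i s) < 1) (n : ℕ) :
    ∃ j ≤ m, ∃ i, (Tbeta β)^[n] (β⁻¹ * code β⁻¹ s) = block β⁻¹ j (code β⁻¹ (shiftN i s)) := by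
  have hβ : 0 < β := inv_pos.1 h.pos
  have hmem : ∀ i, code β⁻¹ (shiftN i s) ∈ Ico 0 1 := fun i => ⟨h.code_nonneg _, hlt i⟩
  induction n with
  | zero => exact ⟨0, m.zero_le, 0, (block_zero _ _).symm⟩
  | succ n ih =>
    obtain ⟨j, hj, i, heq⟩ := ih
    rw [Function.iterate_succ_apply', heq]
    cases j with
    | zero =>
      rw [block_zero, Tbeta_inv_mul hβ.ne' (hmem i), h.code_shiftN hs]
      exact ⟨s i, hs i, i + 1, rfl⟩
    | succ j =>
      have hjm : j ≤ m := j.le_succ.trans hj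
      exact ⟨j, hjm, i, Tbeta_block_succ hβ (h.onesSum_succ_le_one hjm) (hmem i)⟩

lemma inv_mul_code_mem_Eset (h : IsMultinacciRatio β⁻¹ m) (hs : ∀ i, s i ≤ m)
    (hmem : ∀ i, code β⁻¹ (shiftN i s) ∈ Ico (code β⁻¹ s) 1) : β⁻¹ * code β⁻¹ s ∈ Eset β := by
  refine (mem_Eset_iff (inv_pos.1 h.pos).le).2 ⟨⟨?_, ?_⟩, fun n => ?_⟩
  · exact mul_nonneg h.pos.le (h.code_nonneg s)
  · exact mul_lt_one_of_nonneg_of_lt_one_left h.pos.le h.lt_one (h.code_le_one hs)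
  · obtain ⟨j, -, i, heq⟩ := h.exists_iterate_Tbeta_eq_block hs (fun i => (hmem i).2) n
    rw [heq]
    exact (mul_le_mul_of_nonneg_left (hmem i).1 h.pos.le).trans
      (mul_le_block h.pos.le ⟨h.code_nonneg _, (hmem i).2.le⟩ j)

lemma exists_eq_block_of_mem_Kset (h : IsMultinacciRatio β⁻¹ m) (hβ : β ≤ 2) {t y : ℝ}
    (hy : y ∈ Kset β t) : ∃ j ≤ m, ∃ z ∈ Kset β t, β * t ≤ z ∧ y = block β⁻¹ j z := by
  have hβ0 : 0 < β := inv_pos.1 h.pos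
  obtain ⟨j, hj, z, hz, rfl⟩ :=
    (exists_eq_block_or_onesSum_le ⟨hβ0, hβ⟩ (m + 1) hy.1).resolve_right
      (h.onesSum_eq_one ▸ hy.1.2.not_ge)
  have hjm : j ≤ m := Nat.lt_succ_iff.1 hj
  have horbit : (Tbeta β)^[j] (block β⁻¹ j z) = β⁻¹ * z :=
    iterate_Tbeta_block hβ0 ((onesSum_mono h.pos.le j.le_succ).trans (h.onesSum_succ_le_one hjm)) hz
  have horbit' : (Tbeta β)^[j + 1] (block β⁻¹ j z) = z := by
    rw [Function.iterate_succ_apply', horbit, Tbeta_inv_mul hβ0.ne' hz]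
  refine ⟨j, hjm, z, ⟨hz, fun n => ?_⟩, ?_, rfl⟩
  · rw [← horbit', ← Function.iterate_add_apply]
    exact hy.2 _
  · exact (le_inv_mul_iff₀ hβ0).1 (horbit ▸ hy.2 j)

lemma Kset_subset_iUnion_block (h : IsMultinacciRatio β⁻¹ m) (hβ : β ≤ 2) (t : ℝ) :
    Kset β t ⊆ ⋃ j, block β⁻¹ j '' (code β⁻¹ '' survivorCodes β⁻¹ m (β * t)) := by
  intro y hy
  obtain ⟨j, -, z, hz, htz, rfl⟩ := h.exists_eq_block_of_mem_Kset hβ hy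
  obtain ⟨s, hs, hmem, rfl⟩ := h.exists_code_eq (B := {z ∈ Kset β t | β * t ≤ z})
    (fun w hw => ⟨hw.1.1.1, hw.1.1.2.le⟩)
    (fun w hw => (h.exists_eq_block_of_mem_Kset hβ hw.1).imp fun j ⟨hj, v, hv, htv, heq⟩ =>
      ⟨hj, v, ⟨hv, htv⟩, heq⟩) ⟨hz, htz⟩
  exact mem_iUnion.2 ⟨j, mem_image_of_mem _ (mem_image_of_mem _
    ⟨hs, fun i => ⟨(hmem i).2, (hmem i).1.1.2⟩⟩)⟩

end IsMultinacciRatio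

/-! ### Comparison of dimensions -/

lemma dimH_image_le_of_edist_le {ι X Y : Type*} [EMetricSpace X] [EMetricSpace Y] {S : Set ι}
    {F : ι → X} {G : ι → Y} {C r : NNReal} (hr : 0 < r)
    (hFG : ∀ x ∈ S, ∀ y ∈ S, edist (G x) (G y) ≤ C * edist (F x) (F y) ^ (r : ℝ)) :
    dimH (G '' S) ≤ dimH (F '' S) / r := by
  rcases S.eq_empty_or_nonempty with rfl | ⟨x₀, -⟩
  · simp
  have : Nonempty ι := ⟨x₀⟩
  have hmem : ∀ x ∈ S, Function.invFunOn F S (F x) ∈ S := fun x hx =>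
    Function.invFunOn_mem ⟨x, hx, rfl⟩
  have heq : ∀ x ∈ S, F (Function.invFunOn F S (F x)) = F x := fun x hx =>
    Function.invFunOn_eq ⟨x, hx, rfl⟩
  have hHolder : HolderOnWith C r (G ∘ Function.invFunOn F S) (F '' S) := by
    rintro _ ⟨x, hx, rfl⟩ _ ⟨y, hy, rfl⟩
    have hle := hFG _ (hmem x hx) _ (hmem y hy)
    rwa [heq x hx, heq y hy] at hle
  refine (dimH_mono ?_).trans (hHolder.dimH_image_le hr)
  rintro _ ⟨x, hx, rfl⟩
  refine ⟨F x, mem_image_of_mem F hx, edist_le_zero.1 ?_⟩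
  have hle := hFG _ (hmem x hx) x hx
  rwa [heq x hx, edist_self, ENNReal.zero_rpow_of_pos (NNReal.coe_pos.2 hr), mul_zero] at hle

lemma pow_le_inv_mul_rpow {b D : ℝ} (hb : 0 < b) (hb1 : b ≤ 1) {l q n M K : ℕ} (hn : 0 < n)
    (hql : q * n ≤ l) (hD : b ^ (l + M * q + K) ≤ D) :
    b ^ l ≤ (b ^ K)⁻¹ * D ^ ((n : ℝ) / (n + M)) := by
  have hden : (0 : ℝ) < n + M := add_pos_of_pos_of_nonneg (Nat.cast_pos.2 hn) M.cast_nonneg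
  have hexp : (l + M * q + K : ℝ) * (n / (n + M)) ≤ K + l := by
    have hql' : (q * n : ℝ) ≤ l := by exact_mod_cast hql
    rw [mul_div_assoc', div_le_iff₀ hden]
    nlinarith [mul_le_mul_of_nonneg_left hql' (Nat.cast_nonneg (α := ℝ) M),
      mul_nonneg (Nat.cast_nonneg (α := ℝ) K) (Nat.cast_nonneg (α := ℝ) M)]
  rw [le_inv_mul_iff₀ (pow_pos hb K), ← pow_add]
  calc b ^ (K + l) ≤ (b ^ (l + M * q + K)) ^ ((n : ℝ) / (n + M)) := by
        rw [← Real.rpow_natCast, ← Real.rpow_natCast, ← Real.rpow_mul hb.le]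
        exact Real.rpow_le_rpow_of_exponent_ge hb hb1 (by exact_mod_cast hexp)
    _ ≤ D ^ ((n : ℝ) / (n + M)) := Real.rpow_le_rpow (pow_nonneg hb.le _) hD (by positivity)

lemma lipschitzWith_block (b : ℝ) (j : ℕ) : LipschitzWith (‖b‖₊ ^ (j + 1)) (block b j) :=
  LipschitzWith.of_dist_le_mul fun x y => by
    simp only [block, dist_add_left, Real.dist_eq, ← mul_sub, abs_mul, abs_pow, NNReal.coe_pow,
      coe_nnnorm, Real.norm_eq_abs, le_refl]

namespace IsMultinacciRatio

section InsertMax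

variable {b u : ℝ} {m L : ℕ} {e φ x : ℕ → ℕ}

lemma le_code_insertMax (h : IsMultinacciRatio b m) (hφ : StrictMono φ) {l : ℕ} (hLl : L < l)
    (hl : l < φ 0) (hel : e l < m) (he : e ∈ survivorCodes b m u)
    (hx : x ∈ survivorCodes b m u) : u ≤ code b (insertMax m L e φ x) :=
  (he.2 0).1.trans (h.code_le_code he.1 (insertMax_le hφ he.1 hx.1)
    (Or.inr (seqLt_insertMax hφ hLl hl hel he.1)))

lemma code_shiftN_insertMax_mem (h : IsMultinacciRatio b m) (hφ : StrictMono φ)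
    (hL : 2 * L < φ 0) (hgap : ∀ p, φ p + L < φ (p + L)) (heL : e L < m)
    (he : e ∈ survivorCodes b m u) (hmin : ∀ s ∈ survivorCodes b m u, seqLe e s)
    (hx : x ∈ survivorCodes b m u) (i : ℕ) :
    code b (shiftN i (insertMax m L e φ x)) ∈ Ico (code b (insertMax m L e φ x)) 1 := by
  have hY : ∀ k, insertMax m L e φ x k ≤ m := insertMax_le hφ he.1 hx.1
  refine ⟨?_, h.code_shiftN_lt_one hY
    (frequently_insertMax_lt hφ (h.frequently_lt_of_mem_survivorCodes hx)) i⟩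
  rcases eq_or_ne i 0 with rfl | hi
  · exact le_rfl
  · exact h.code_le_code hY (fun k => hY _) (Or.inr (seqLt_insertMax_shiftN hφ hL hgap heL he.1
      hx.1 (fun k => hmin _ (shiftN_mem_survivorCodes he k))
      (fun k => hmin _ (shiftN_mem_survivorCodes hx k)) hi))

/-- Inserting one letter `m` after every `n` letters of `x` costs only a factor `b^((m+1)(d/n))`
of separation, because all shifts of `insertMax m L e φ x'` have code bounded below. -/
lemma le_code_sub_code_insertMax (h : IsMultinacciRatio b m) {N n : ℕ} (hLN : L + 1 < N)
    (he : ∀ i, e i ≤ m) (hx : ∀ i, x i ≤ m) {x' : ℕ → ℕ} (hx' : ∀ i, x' i ≤ m)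
    (hmin : ∀ i, code b (insertMax m L e (stretch N n) x') ≤
      code b (shiftN i (insertMax m L e (stretch N n) x')))
    {d : ℕ} (hd : ∀ i < d, x i = x' i) (hlt : x d < x' d) :
    b ^ (blockLen x d + (m + 1) * (d / n) + (m + 1) * (N + L + 2) + 1) ≤
      code b (insertMax m L e (stretch N n) x') - code b (insertMax m L e (stretch N n) x) := by
  set φ := stretch N n
  have hφ : StrictMono φ := strictMono_stretch N n
  set Y := insertMax m L e φ x
  set Y' := insertMax m L e φ x'
  have hY : ∀ i, Y i ≤ m := insertMax_le hφ he hx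
  have hY' : ∀ i, Y' i ≤ m := insertMax_le hφ he hx'
  have hlower : b ^ ((m + 1) * (L + 1) + 1) ≤ code b (shiftN (φ d + 1) Y') := by
    have hφ0 : L + 1 < φ 0 := by simpa [φ, stretch] using hLN
    refine (h.pow_le_code hY' ?_).trans (hmin _)
    exact h.one_le.trans_eq (insertMax_of_lt hφ L.lt_succ_self hφ0).symm
  have hlen : blockLen Y (φ d) ≤ blockLen x d + (m + 1) * (N + d / n) := by
    have hcomp := blockLen_add_le_of_comp hφ hY (insertMax_apply hφ) d
    have hφd : φ d = N + d + d / n := rfl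
    rw [hφd] at hcomp ⊢
    nlinarith
  calc b ^ (blockLen x d + (m + 1) * (d / n) + (m + 1) * (N + L + 2) + 1)
      = b ^ (blockLen x d + (m + 1) * (N + d / n)) *
          (b ^ (m + 1) * b ^ ((m + 1) * (L + 1) + 1)) := by ring
    _ ≤ b ^ blockLen Y (φ d) * (b ^ (m + 1) * code b (shiftN (φ d + 1) Y')) := by
        have hb := h.pos
        gcongr ?_ * (_ * ?_)
        exact pow_le_pow_of_le_one h.pos.le h.lt_one.le hlen
    _ ≤ code b Y' - code b Y := by
        refine h.le_code_sub_code hY hY' (fun i hi => insertMax_congr hφ hd hi) ?_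
        exact (insertMax_apply hφ d).trans_lt (hlt.trans_eq (insertMax_apply hφ d).symm)

end InsertMax

variable {m : ℕ}

lemma exists_mapsTo_Eset (h : IsMultinacciRatio β⁻¹ m) {t : ℝ}
    (hne : (survivorCodes β⁻¹ m (β * t)).Nonempty) {n : ℕ} (hn : 0 < n) :
    ∃ F : (ℕ → ℕ) → ℝ, MapsTo F (survivorCodes β⁻¹ m (β * t)) (Eset β ∩ Icc t 1) ∧
      ∃ K, ∀ x ∈ survivorCodes β⁻¹ m (β * t), ∀ x' ∈ survivorCodes β⁻¹ m (β * t), ∀ d,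
        (∀ i < d, x i = x' i) → x d < x' d →
          β⁻¹ ^ (blockLen x d + (m + 1) * (d / n) + K) ≤ F x' - F x := by
  have hβ : 0 < β := inv_pos.1 h.pos
  obtain ⟨e, he, hmin⟩ : ∃ e ∈ survivorCodes β⁻¹ m (β * t),
      ∀ s ∈ survivorCodes β⁻¹ m (β * t), seqLe e s :=
    ⟨_, h.lexInf_mem_survivorCodes hne, fun _ => seqLe_lexInf⟩
  have hfreq := frequently_atTop.1 (h.frequently_lt_of_mem_survivorCodes he)
  obtain ⟨L, hnL, heL⟩ := hfreq n
  obtain ⟨l, hLl, hel⟩ := hfreq (L + 1)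
  set N := 2 * L + l + 1
  have hφ := strictMono_stretch N n
  have hφ0 : stretch N n 0 = N := by simp [stretch]
  have hmem : ∀ x ∈ survivorCodes β⁻¹ m (β * t), ∀ i,
      code β⁻¹ (shiftN i (insertMax m L e (stretch N n) x)) ∈
        Ico (code β⁻¹ (insertMax m L e (stretch N n) x)) 1 := fun x hx =>
    h.code_shiftN_insertMax_mem hφ (by omega) (stretch_add_lt hn hnL N) heL he hmin hx
  refine ⟨fun x => β⁻¹ * code β⁻¹ (insertMax m L e (stretch N n) x), fun x hx => ?_,
    (m + 1) * (N + L + 2) + 2, fun x hx x' hx' d hd hlt => ?_⟩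
  · have hE := h.inv_mul_code_mem_Eset (insertMax_le hφ he.1 hx.1) (hmem x hx)
    exact ⟨hE, (le_inv_mul_iff₀ hβ).2 (h.le_code_insertMax hφ hLl (by omega) hel he hx),
      hE.1.2.le⟩
  · rw [← mul_sub, ← add_assoc, pow_succ']
    exact mul_le_mul_of_nonneg_left (h.le_code_sub_code_insertMax (by omega) he.1 hx.1 hx'.1
      (fun i => (hmem x' hx' i).1) hd hlt) h.pos.le

lemma abs_code_sub_code_le_rpow {b u : ℝ} (h : IsMultinacciRatio b m) {F : (ℕ → ℕ) → ℝ}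
    {K n : ℕ} (hn : 0 < n)
    (hF : ∀ x ∈ survivorCodes b m u, ∀ x' ∈ survivorCodes b m u, ∀ d,
      (∀ i < d, x i = x' i) → x d < x' d →
        b ^ (blockLen x d + (m + 1) * (d / n) + K) ≤ F x' - F x)
    {x x' : ℕ → ℕ} (hx : x ∈ survivorCodes b m u) (hx' : x' ∈ survivorCodes b m u) :
    |code b x - code b x'| ≤ (b ^ K)⁻¹ * |F x - F x'| ^ ((n : ℝ) / (n + (m + 1 : ℕ))) := by
  have key : ∀ {x x'}, x ∈ survivorCodes b m u → x' ∈ survivorCodes b m u → seqLt x x' →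
      |code b x' - code b x| ≤ (b ^ K)⁻¹ * |F x' - F x| ^ ((n : ℝ) / (n + (m + 1 : ℕ))) := by
    rintro x x' hx hx' ⟨d, hd, hlt⟩
    exact (h.abs_code_sub_code_le hx.1 hx'.1 hd).trans (pow_le_inv_mul_rpow h.pos h.lt_one.le hn
      ((Nat.div_mul_le_self d n).trans (le_blockLen x d))
      ((hF x hx x' hx' d hd hlt).trans (le_abs_self _)))
  rcases eq_or_ne x x' with rfl | hne
  · have := h.pos
    rw [sub_self, abs_zero]
    positivity
  rcases seqLt_or_seqLt_of_ne hne with hlt | hlt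
  · rw [abs_sub_comm, abs_sub_comm (F x)]
    exact key hx hx' hlt
  · exact key hx' hx hlt

lemma dimH_code_survivorCodes_le_div (h : IsMultinacciRatio β⁻¹ m) (t : ℝ) {n : ℕ}
    (hn : 0 < n) :
    dimH (code β⁻¹ '' survivorCodes β⁻¹ m (β * t)) ≤
      dimH (Eset β ∩ Icc t 1) / ((n / (n + (m + 1 : ℕ)) : NNReal) : ENNReal) := by
  rcases (survivorCodes β⁻¹ m (β * t)).eq_empty_or_nonempty with hempty | hne
  · simp [hempty]
  obtain ⟨F, hmaps, K, hF⟩ := h.exists_mapsTo_Eset hne hn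
  have hr : (0 : NNReal) < n / (n + (m + 1 : ℕ)) :=
    div_pos (Nat.cast_pos.2 hn) (add_pos_of_pos_of_nonneg (Nat.cast_pos.2 hn) zero_le)
  have hK : 0 ≤ (β⁻¹ ^ K)⁻¹ := inv_nonneg.2 (pow_nonneg h.pos.le K)
  refine (dimH_image_le_of_edist_le (F := F) (C := (β⁻¹ ^ K)⁻¹.toNNReal) hr
    fun x hx x' hx' => ?_).trans (ENNReal.div_le_div_right (dimH_mono hmaps.image_subset) _)
  rw [edist_dist, edist_dist, Real.dist_eq, Real.dist_eq,
    ENNReal.ofReal_rpow_of_nonneg (abs_nonneg _) NNReal.zero_le_coe]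
  refine le_trans (ENNReal.ofReal_le_ofReal (h.abs_code_sub_code_le_rpow hn hF hx hx')) ?_
  rw [ENNReal.ofReal_mul hK]
  exact le_of_eq (by simp [ENNReal.ofReal])

lemma dimH_code_survivorCodes_le (h : IsMultinacciRatio β⁻¹ m) (t : ℝ) :
    dimH (code β⁻¹ '' survivorCodes β⁻¹ m (β * t)) ≤ dimH (Eset β ∩ Icc t 1) := by
  have hratio : Tendsto (fun n : ℕ => ((n / (n + (m + 1 : ℕ)) : NNReal) : ENNReal)) atTop
      (𝓝 ((1 : NNReal) : ENNReal)) := by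
    rw [ENNReal.tendsto_coe, ← NNReal.tendsto_coe]
    simpa using tendsto_natCast_div_add_atTop (((m + 1 : ℕ) : ℝ))
  have hlim := ENNReal.Tendsto.const_mul (a := dimH (code β⁻¹ '' survivorCodes β⁻¹ m (β * t)))
    hratio (Or.inl (by simp))
  rw [ENNReal.coe_one, mul_one] at hlim
  exact le_of_tendsto hlim ((eventually_gt_atTop 0).mono fun n hn =>
    ENNReal.mul_le_of_le_div (h.dimH_code_survivorCodes_le_div t hn))

lemma dimH_Kset_le (h : IsMultinacciRatio β⁻¹ m) (hβ : β ≤ 2) (t : ℝ) :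
    dimH (Kset β t) ≤ dimH (code β⁻¹ '' survivorCodes β⁻¹ m (β * t)) :=
  calc dimH (Kset β t)
      ≤ dimH (⋃ j, block β⁻¹ j '' (code β⁻¹ '' survivorCodes β⁻¹ m (β * t))) :=
        dimH_mono (h.Kset_subset_iUnion_block hβ t)
    _ = ⨆ j, dimH (block β⁻¹ j '' (code β⁻¹ '' survivorCodes β⁻¹ m (β * t))) := dimH_iUnion _
    _ ≤ dimH (code β⁻¹ '' survivorCodes β⁻¹ m (β * t)) :=
        iSup_le fun j => (lipschitzWith_block β⁻¹ j).dimH_image_le _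

end IsMultinacciRatio

lemma onesSum_inv_eq_one_iff (hβ : β ≠ 0) (k : ℕ) :
    onesSum β⁻¹ k = 1 ↔ β ^ k = ∑ i ∈ Finset.range k, β ^ i := by
  have hmul : β ^ k * onesSum β⁻¹ k = ∑ i ∈ Finset.range k, β ^ i := by
    rw [onesSum, Finset.mul_sum, ← Finset.sum_range_reflect (fun i => β ^ i)]
    refine Finset.sum_congr rfl fun i hi => ?_
    have hik : i + 1 ≤ k := Finset.mem_range.1 hi
    rw [Nat.sub_sub, add_comm 1, pow_sub₀ _ hβ hik, inv_pow]
  rw [← hmul, left_eq_mul₀ (pow_ne_zero k hβ)]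

lemma exists_isMultinacciRatio_inv (hβ : 1 < β) (hmulti : IsMultinacci β) :
    ∃ m, IsMultinacciRatio β⁻¹ m := by
  obtain ⟨m, -, hm⟩ := hmulti
  have hβ0 : 0 < β := zero_lt_one.trans hβ
  exact ⟨m, inv_pos.2 hβ0, inv_lt_one_of_one_lt₀ hβ, (onesSum_inv_eq_one_iff hβ0.ne' _).2 hm⟩

end Multinacci

/-- For a multinacci `β ∈ (1,2)` and every `t ∈ [0,1)`,
`dim_H (E_β ∩ [t,1]) = dim_H K_β(t)`. -/
theorem stmt_3 (β : ℝ) (hβ : β ∈ Set.Ioo (1 : ℝ) 2) (hmulti : IsMultinacci β) :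
    ∀ t ∈ Set.Ico (0 : ℝ) 1,
      dimH (Eset β ∩ Set.Icc t 1) = dimH (Kset β t) := by
  intro t _
  obtain ⟨m, h⟩ := Multinacci.exists_isMultinacciRatio_inv hβ.1 hmulti
  refine le_antisymm ?_ ?_
  · exact dimH_mono (Multinacci.Eset_inter_Icc_subset (zero_lt_one.trans hβ.1).le t)
  · exact (h.dimH_Kset_le hβ.2.le t).trans (h.dimH_code_survivorCodes_le t)
end
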